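/- arXiv:1308.0791 — 2 statements merged into one kernel-verified Lean document; each statement's English description precedes it below -/
import Mathlib

section
/- Let K ⊆ ℝ² be a two-dimensional convex body. Then i(K,R(K)) < ∞ if and only if there exists δ > 0 such that K ∩ B°(c_K,δ) ⊆ ⋃_{x ∈ K ∩ bd(B(c_K,R(K)))} (K + (c_K − x)), i.e., the union of the translates K + (c_K − x) over all x ∈ K ∩ bd(B(c_K,R(K))) covers a neighborhood of c_K in K. -/
open Metric Set
open scoped RealInnerProductSpace

/-- The quantified t-illumination number `i(K,ε)`: the least `m` for which there exist
unit vectors `r_1, …, r_m` such that every `x ∈ K` satisfies `x + ε • r_i ∈ K` for some `i`;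
`∞` if no finite such family exists. -/
noncomputable def iq {n : ℕ} (K : Set (EuclideanSpace ℝ (Fin n))) (ε : ℝ) : ℕ∞ :=
  sInf {m : ℕ∞ | ∃ s : Finset (EuclideanSpace ℝ (Fin n)), (s.card : ℕ∞) = m ∧
    (∀ r ∈ s, ‖r‖ = 1) ∧ ∀ x ∈ K, ∃ r ∈ s, x + ε • r ∈ K}

/-- The quantified illumination number `c(K,ε)`: the least `m` for which there exist
unit vectors `r_1, …, r_m` such that every `x ∈ K` satisfies `x + ε • r_i ∈ int K` for some `i`;
`∞` if no finite such family exists. -/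
noncomputable def cq {n : ℕ} (K : Set (EuclideanSpace ℝ (Fin n))) (ε : ℝ) : ℕ∞ :=
  sInf {m : ℕ∞ | ∃ s : Finset (EuclideanSpace ℝ (Fin n)), (s.card : ℕ∞) = m ∧
    (∀ r ∈ s, ‖r‖ = 1) ∧ ∀ x ∈ K, ∃ r ∈ s, x + ε • r ∈ interior K}

/-- `B(c, R)` is the circumball of `K`: a closed ball containing `K` of minimal radius. -/
def IsCircumball {n : ℕ} (K : Set (EuclideanSpace ℝ (Fin n)))
    (c : EuclideanSpace ℝ (Fin n)) (R : ℝ) : Prop :=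
  K ⊆ closedBall c R ∧ ∀ (c' : EuclideanSpace ℝ (Fin n)) (R' : ℝ), K ⊆ closedBall c' R' → R ≤ R'

/-!
A displacement of length `R` that keeps points of `K` near `c` inside `K` must, `K` being closed,
keep `c` inside `K`; it is then `p - c` for a contact point `p` of `K` with the circumsphere. So
finitely many directions can only serve a neighbourhood of `c` if the translates `K + (c - p)` cover
it.

Conversely, the minimality of the circumball says that `c` is in the convex hull of the contact
points, and this is all that is needed about it. Take `c = 0`. Any `y ≠ 0` in `K` is at distance
more than `R` from some contact point, hence is carried into the interior of `K` by a displacement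
of length `R`, which also serves the points near `y`; by compactness finitely many displacements
serve `K` outside a given neighbourhood of `0`. Near `0`, as `0` is not an extreme point, the
planar body `K` agrees with a cone, so the directions in `K` form a compact set `S`. The contact
points serving `v ∈ S` near some `u ∈ S` on one side of `u` accumulate, and a two-dimensional
argument turns this into one contact point serving `s • v` for all small `s > 0` and all `v ∈ S`
near `u` on that side. Compactness of `S` finishes the proof.
-/

open Filter Topology
open scoped Pointwise

/-- Some displacement from `F` carries `x` into `K`. For `F` a set of vectors of norm `ε` this is
the `ε`-t-illumination of `x` by the directions of `F`: the step length is part of the vectors. -/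
def IsTIlluminated {E : Type*} [Add E] (K F : Set E) (x : E) : Prop :=
  ∃ r ∈ F, x + r ∈ K

namespace IsTIlluminated

theorem mono {E : Type*} [Add E] {K F G : Set E} {x : E} (h : IsTIlluminated K F x) (hFG : F ⊆ G) :
    IsTIlluminated K G x :=
  let ⟨r, hr, hx⟩ := h
  ⟨r, hFG hr, hx⟩

theorem eventually_exists_mem {E : Type*} [TopologicalSpace E] [Add E] [ContinuousAdd E]
    {K F : Set E} (hK : IsClosed K) (hF : F.Finite) (c : E) :
    ∀ᶠ x in 𝓝 c, IsTIlluminated K F x → ∃ r ∈ F, c + r ∈ K ∧ x + r ∈ K := by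
  have h_avoid : ∀ᶠ x in 𝓝 c, ∀ r ∈ F, c + r ∉ K → x + r ∉ K := by
    refine (eventually_all_finite hF).2 fun r _ => ?_
    by_cases hr : c + r ∈ K
    · exact .of_forall fun x h => absurd hr h
    · have : ∀ᶠ x in 𝓝 c, x + r ∈ Kᶜ :=
        (continuous_add_const r).continuousAt.eventually_mem (hK.isOpen_compl.mem_nhds hr)
      exact this.mono fun x hx _ => hx
  filter_upwards [h_avoid] with x hx ⟨r, hr, hxr⟩
  exact ⟨r, hr, by_contra fun h => hx r hr h hxr, hxr⟩

protected theorem vadd_iff {E : Type*} [AddGroup E] {K F : Set E} (c : E) {x : E} :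
    IsTIlluminated (c +ᵥ K) F (c +ᵥ x) ↔ IsTIlluminated K F x := by
  simp only [IsTIlluminated, vadd_eq_add, add_assoc, mem_vadd_set_iff_neg_vadd_mem,
    neg_add_cancel_left]

end IsTIlluminated

theorem isCompact_convexHull {E : Type*} [NormedAddCommGroup E] [NormedSpace ℝ E]
    [FiniteDimensional ℝ E] {P : Set E} (hP : IsCompact P) : IsCompact (convexHull ℝ P) := by
  let hullOf (k : ℕ) : Set E := (fun wz : (Fin k → ℝ) × (Fin k → E) => ∑ i, wz.1 i • wz.2 i) ''
    (stdSimplex ℝ (Fin k) ×ˢ univ.pi fun _ => P)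
  have h_compact (k : ℕ) : IsCompact (hullOf k) :=
    ((isCompact_stdSimplex ℝ (Fin k)).prod (isCompact_univ_pi fun _ => hP)).image (by fun_prop)
  have h_eq : convexHull ℝ P = ⋃ k ∈ Finset.range (Module.finrank ℝ E + 2), hullOf k := by
    refine subset_antisymm (fun x hx => ?_) (iUnion₂_subset fun k _ => ?_)
    · obtain ⟨ι, _, z, w, hzP, hz_indep, hw_pos, hw_sum, rfl⟩ :=
        eq_pos_convex_span_of_mem_convexHull hx
      let e := Fintype.equivFin ι
      refine mem_biUnion (x := Fintype.card ι) ?_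
        ⟨(w ∘ e.symm, z ∘ e.symm), ⟨⟨fun i => ?_, ?_⟩, ?_⟩, ?_⟩
      · simpa [Nat.lt_succ_iff] using hz_indep.card_le_finrank_succ.trans
          (Nat.succ_le_succ (Submodule.finrank_le _))
      · exact (hw_pos _).le
      · exact (Equiv.sum_comp e.symm w).trans hw_sum
      · exact fun i _ => hzP ⟨_, rfl⟩
      · exact Equiv.sum_comp e.symm fun i => w i • z i
    · rintro _ ⟨⟨w, z⟩, ⟨⟨hw_nonneg, hw_sum⟩, hz⟩, rfl⟩
      exact (convex_convexHull ℝ P).sum_mem (fun i _ => hw_nonneg i) hw_sum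
        fun i _ => subset_convexHull ℝ P (hz i (mem_univ i))
  rw [h_eq]
  exact (Finset.range _).isCompact_biUnion fun k _ => h_compact k

theorem exists_mem_nonpos_of_zero_mem_convexHull {E : Type*} [AddCommGroup E] [Module ℝ E]
    {P : Set E} (h0 : (0 : E) ∈ convexHull ℝ P) (f : E →ₗ[ℝ] ℝ) : ∃ p ∈ P, f p ≤ 0 := by
  by_contra! h
  have : convexHull ℝ P ⊆ {x | 0 < f x} :=
    convexHull_min h (convex_halfSpace_gt f.isLinear 0)
  simpa using this h0

theorem iq_lt_top_iff {n : ℕ} {K : Set (EuclideanSpace ℝ (Fin n))} {R : ℝ} (hR : 0 < R) :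
    iq K R < ⊤ ↔ ∃ F ⊆ sphere 0 R, F.Finite ∧ ∀ x ∈ K, IsTIlluminated K F x := by
  rw [iq, sInf_lt_iff]
  constructor
  · rintro ⟨_, ⟨s, rfl, hs_norm, hs⟩, -⟩
    refine ⟨(R • ·) '' s, ?_, s.finite_toSet.image _, fun x hx => ?_⟩
    · rintro _ ⟨r, hr, rfl⟩
      simp [norm_smul, hs_norm r hr, hR.le]
    · obtain ⟨r, hr, hxr⟩ := hs x hx
      exact ⟨R • r, mem_image_of_mem _ hr, hxr⟩
  · rintro ⟨F, hF_sphere, hF_fin, hF⟩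
    classical
    refine ⟨_, ⟨hF_fin.toFinset.image (R⁻¹ • ·), rfl, ?_, fun x hx => ?_⟩, ENat.natCast_lt_top _⟩
    · simp only [Finset.mem_image, Finite.mem_toFinset, forall_exists_index, and_imp,
        forall_apply_eq_imp_iff₂]
      intro r hr
      rw [norm_smul, mem_sphere_zero_iff_norm.1 (hF_sphere hr), norm_inv, Real.norm_of_nonneg hR.le,
        inv_mul_cancel₀ hR.ne']
    · obtain ⟨r, hr, hxr⟩ := hF x hx
      exact ⟨R⁻¹ • r, Finset.mem_image_of_mem _ (hF_fin.mem_toFinset.2 hr),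
        by rwa [smul_inv_smul₀ hR.ne']⟩

theorem exists_ball_subset_iUnion_translates_iff {E : Type*} [SeminormedAddCommGroup E]
    {K P : Set E} {c : E} :
    (∃ δ : ℝ, 0 < δ ∧ K ∩ ball c δ ⊆ ⋃ p ∈ P, (· + (c - p)) '' K) ↔
      ∀ᶠ x in 𝓝[K] c, IsTIlluminated K (-c +ᵥ P) x := by
  have h_mem (x : E) : x ∈ ⋃ p ∈ P, (· + (c - p)) '' K ↔ IsTIlluminated K (-c +ᵥ P) x := by
    simp only [IsTIlluminated, mem_iUnion₂, image_add_right, mem_preimage, neg_sub, exists_prop,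
      ← image_vadd, exists_mem_image, vadd_eq_add, neg_add_eq_sub]
  simp only [Filter.Eventually, Metric.mem_nhdsWithin_iff, subset_def, h_mem, inter_comm K,
    mem_ofPred_eq, gt_iff_lt]

theorem two_mul_inner_le_of_norm_le_norm_sub_smul {E : Type*} [SeminormedAddCommGroup E]
    [InnerProductSpace ℝ E] {x w : E} {s : ℝ} (hs : 0 < s) (h : ‖x‖ ≤ ‖x - s • w‖) :
    2 * ⟪x, w⟫ ≤ s * ‖w‖ ^ 2 := by
  have h_sq : ‖x‖ ^ 2 ≤ ‖x - s • w‖ ^ 2 := by gcongr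
  rw [norm_sub_sq_real, inner_smul_right, norm_smul, mul_pow, Real.norm_of_nonneg hs.le] at h_sq
  refine le_of_mul_le_mul_left ?_ hs
  linarith

namespace IsCircumball

variable {n : ℕ} {K : Set (EuclideanSpace ℝ (Fin n))} {c : EuclideanSpace ℝ (Fin n)} {R : ℝ}

theorem radius_pos [Nontrivial (EuclideanSpace ℝ (Fin n))] (h : IsCircumball K c R)
    (hK : (interior K).Nonempty) : 0 < R := by
  by_contra! hR
  obtain ⟨x, hx⟩ := hK.mono (interior_mono h.1)
  rw [(subsingleton_closedBall c hR).eq_singleton_of_mem (interior_subset hx),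
    interior_singleton] at hx
  exact hx

theorem exists_le_dist (h : IsCircumball K c R) (hK : IsCompact K) (hne : K.Nonempty)
    (c' : EuclideanSpace ℝ (Fin n)) : ∃ x ∈ K, R ≤ dist x c' :=
  let ⟨x, hxK, hx⟩ := hK.exists_isMaxOn hne (f := (dist · c')) (by fun_prop)
  ⟨x, hxK, h.2 c' _ fun _ hy => hx hy⟩

/-- The points of `K` farthest from `c + s • w` accumulate, as `s ↓ 0`, at the required point. -/
theorem exists_mem_sphere_inner_nonpos (h : IsCircumball K c R) (hK : IsCompact K)
    (hne : K.Nonempty) (w : EuclideanSpace ℝ (Fin n)) :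
    ∃ p ∈ K ∩ sphere c R, ⟪p - c, w⟫ ≤ 0 := by
  choose far hfar_mem hfar using fun s : ℝ => h.exists_le_dist hK hne (c + s • w)
  let U : Ultrafilter ℝ := .of (𝓝[>] 0)
  have hU : (U : Filter ℝ) ≤ 𝓝[>] 0 := Ultrafilter.of_le _
  have hU_zero : Tendsto (fun s : ℝ => s) U (𝓝 0) := hU.trans nhdsWithin_le_nhds
  obtain ⟨p, hpK, hp⟩ : ∃ p ∈ K, Tendsto far U (𝓝 p) :=
    hK.ultrafilter_le_nhds (U.map far) (tendsto_principal.2 (.of_forall hfar_mem))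
  refine ⟨p, ⟨hpK, le_antisymm (h.1 hpK) ?_⟩, ?_⟩
  · have : Tendsto (fun s => dist (far s) (c + s • w)) U (𝓝 (dist p (c + (0 : ℝ) • w))) :=
      hp.dist (tendsto_const_nhds.add (hU_zero.smul_const w))
    rw [zero_smul, add_zero] at this
    exact ge_of_tendsto' this hfar
  · have h_inner : ∀ᶠ s in (U : Filter ℝ), 2 * ⟪far s - c, w⟫ ≤ s * ‖w‖ ^ 2 := by
      filter_upwards [hU self_mem_nhdsWithin] with s (hs : 0 < s)
      refine two_mul_inner_le_of_norm_le_norm_sub_smul hs ?_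
      rw [sub_sub, ← dist_eq_norm, ← dist_eq_norm]
      exact (h.1 (hfar_mem s)).trans (hfar s)
    have h_lim : Tendsto (fun s => 2 * ⟪far s - c, w⟫) U (𝓝 (2 * ⟪p - c, w⟫)) :=
      ((hp.sub_const c).inner tendsto_const_nhds).const_mul 2
    have := le_of_tendsto_of_tendsto h_lim (hU_zero.mul_const _) h_inner
    linarith

theorem center_mem_convexHull (h : IsCircumball K c R) (hK : IsCompact K) (hne : K.Nonempty) :
    c ∈ convexHull ℝ (K ∩ sphere c R) := by
  by_contra hc
  have h_hull : IsCompact (convexHull ℝ (K ∩ sphere c R)) :=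
    isCompact_convexHull (hK.inter_right isClosed_sphere)
  obtain ⟨f, u, hfc, hf⟩ :=
    geometric_hahn_banach_point_closed (convex_convexHull ℝ _) h_hull.isClosed hc
  obtain ⟨p, hp, hpw⟩ := h.exists_mem_sphere_inner_nonpos hK hne
    ((InnerProductSpace.toDual ℝ _).symm f)
  have hfp : u < f p := hf p (subset_convexHull ℝ _ hp)
  rw [real_inner_comm, InnerProductSpace.toDual_symm_apply, map_sub] at hpw
  linarith

end IsCircumball

section InnerProductSpace

variable {E : Type*} [NormedAddCommGroup E] [InnerProductSpace ℝ E] {K : Set E} {R : ℝ}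

theorem exists_mem_sphere_add_mem_interior (hK : Convex ℝ K) (hK_int : (interior K).Nonempty)
    (hR : 0 < R) (h0 : (0 : E) ∈ convexHull ℝ (K ∩ sphere 0 R)) {y : E} (hy : y ∈ K)
    (hy0 : y ≠ 0) : ∃ r ∈ sphere (0 : E) R, y + r ∈ interior K := by
  obtain ⟨p, ⟨hpK, hpR⟩, hpy⟩ := exists_mem_nonpos_of_zero_mem_convexHull h0 (innerₗ E y)
  have hp_far : R < ‖p - y‖ := by
    have : R ^ 2 < ‖p - y‖ ^ 2 := by
      have := norm_pos_iff.2 hy0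
      rw [norm_sub_sq_real, mem_sphere_zero_iff_norm.1 hpR, real_inner_comm]
      nlinarith [innerₗ_apply_apply y p]
    exact lt_of_pow_lt_pow_left₀ 2 (norm_nonneg _) this
  obtain ⟨z, hz_int, hz_far⟩ : ∃ z ∈ interior K, R < ‖z - y‖ := by
    have hp_closure : p ∈ closure (interior K) := by
      rw [hK.closure_interior_eq_closure_of_nonempty_interior hK_int]
      exact subset_closure hpK
    have h_open : IsOpen {z | R < ‖z - y‖} := isOpen_lt (by fun_prop) (by fun_prop)
    obtain ⟨z, hz, hz_int⟩ := mem_closure_iff.1 hp_closure _ h_open hp_far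
    exact ⟨z, hz_int, hz⟩
  have hz_pos : 0 < ‖z - y‖ := hR.trans hz_far
  refine ⟨(R / ‖z - y‖) • (z - y), ?_, ?_⟩
  · simp [norm_smul, hz_pos.ne', hR.le]
  · exact hK.add_smul_sub_mem_interior hy hz_int ⟨by positivity, (div_le_one hz_pos).2 hz_far.le⟩

theorem exists_finite_forall_isTIlluminated_of_notMem (hK : Convex ℝ K) (hKc : IsCompact K)
    (hK_int : (interior K).Nonempty) (hR : 0 < R) (h0 : (0 : E) ∈ convexHull ℝ (K ∩ sphere 0 R))
    {U : Set E} (hU : U ∈ 𝓝 0) :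
    ∃ F ⊆ sphere (0 : E) R, F.Finite ∧ ∀ x ∈ K, x ∉ U → IsTIlluminated K F x := by
  have h_cover : K \ interior U ⊆ ⋃ r ∈ sphere (0 : E) R, (· + r) ⁻¹' interior K := by
    rintro x ⟨hxK, hxU⟩
    have hx0 : x ≠ 0 := fun hx => hxU (hx ▸ mem_interior_iff_mem_nhds.2 hU)
    simpa using exists_mem_sphere_add_mem_interior hK hK_int hR h0 hxK hx0
  obtain ⟨F, hF_sub, hF, h⟩ := (hKc.diff isOpen_interior).elim_finite_subcover_image
    (fun r _ => isOpen_interior.preimage (continuous_add_const r)) h_cover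
  refine ⟨F, hF_sub, hF, fun x hxK hxU => ?_⟩
  obtain ⟨r, hr, hxr⟩ := mem_iUnion₂.1 (h ⟨hxK, fun hx => hxU (interior_subset hx)⟩)
  exact ⟨r, hr, interior_subset hxr⟩

end InnerProductSpace

section Planar

attribute [local instance] FiniteDimensional.of_fact_finrank_eq_two

variable {E : Type*} [NormedAddCommGroup E] [InnerProductSpace ℝ E]
  [Fact (Module.finrank ℝ E = 2)]

theorem nonempty_orientation_of_fact_finrank_eq_two : Nonempty (Orientation ℝ E (Fin 2)) :=
  ⟨((stdOrthonormalBasis ℝ E).reindex (finCongr Fact.out)).toBasis.orientation⟩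

variable (o : Orientation ℝ E (Fin 2)) {K M P S : Set E}

local notation "ω" => o.areaForm

theorem continuous_areaForm : Continuous fun z : E × E => ω z.1 z.2 := by
  simp only [← o.inner_rightAngleRotation_left]
  fun_prop

theorem continuous_areaForm_left (y : E) : Continuous fun x => ω x y :=
  (continuous_areaForm o).comp (.prodMk_left y)

theorem continuous_areaForm_right (x : E) : Continuous (ω x) :=
  (continuous_areaForm o).comp (.prodMk_right x)

theorem areaForm_smul_eq_add (a b x : E) : ω a b • x = ω x b • a + ω a x • b := by
  refine ext_inner_left ℝ fun z => ?_
  rcases eq_or_ne z 0 with rfl | hz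
  · simp
  have hz' : ‖z‖ ^ 2 ≠ 0 := by simpa
  simp only [inner_add_right, inner_smul_right]
  refine mul_left_cancel₀ hz' ?_
  linear_combination -⟪z, x⟫ * o.inner_mul_areaForm_sub z a b
    + ⟪z, a⟫ * o.inner_mul_areaForm_sub z x b + ⟪z, b⟫ * o.inner_mul_areaForm_sub z a x

theorem exists_mem_areaForm_ne_zero (hK : (interior K).Nonempty) {p : E} (hp : p ≠ 0) :
    ∃ y ∈ K, ω p y ≠ 0 := by
  by_contra! h
  have h_top : LinearMap.ker (ω p) = ⊤ :=
    Submodule.eq_top_of_nonempty_interior' _ (hK.mono (interior_mono h))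
  have : ω p (o.rightAngleRotation p) = 0 := by
    rw [LinearMap.ker_eq_top.1 h_top, LinearMap.zero_apply]
  simp [hp] at this

theorem eventually_eq_of_areaForm_eq_zero (u : E) :
    ∀ᶠ v in 𝓝 u, ‖v‖ = ‖u‖ → ω u v = 0 → v = u := by
  rcases eq_or_ne u 0 with rfl | hu
  · exact .of_forall fun v hv _ => norm_eq_zero.1 (hv.trans norm_zero)
  have h_inner : ∀ᶠ v in 𝓝 u, 0 < ⟪u, v⟫ :=
    (Continuous.tendsto (by fun_prop) u).eventually_const_lt (real_inner_self_pos.2 hu)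
  filter_upwards [h_inner] with v hv h_norm h_area
  exact ((sameRay_iff_of_norm_eq h_norm.symm).1
    ((o.nonneg_inner_and_areaForm_eq_zero_iff_sameRay u v).1 ⟨hv.le, h_area⟩)).symm

theorem eventually_mem_of_areaForm_nonneg (hM : Convex ℝ M) (h0 : (0 : E) ∈ M) {a b : E}
    (ha : a ∈ M) (hb : b ∈ M) (hab : 0 < ω a b) :
    ∀ᶠ x in 𝓝 0, 0 ≤ ω a x → 0 ≤ ω x b → x ∈ M := by
  have h_left : ∀ᶠ x in 𝓝 0, 2 * (ω x b / ω a b) < 1 :=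
    (Continuous.tendsto (by have := continuous_areaForm_left o b; fun_prop) 0).eventually_lt_const
      (by simp)
  have h_right : ∀ᶠ x in 𝓝 0, 2 * (ω a x / ω a b) < 1 :=
    (Continuous.tendsto (by have := continuous_areaForm_right o a; fun_prop) 0).eventually_lt_const
      (by simp)
  filter_upwards [h_left, h_right] with x hx_left hx_right hax hxb
  have h_eq : x = (1 / 2 : ℝ) • (2 * (ω x b / ω a b)) • a
      + (1 / 2 : ℝ) • (2 * (ω a x / ω a b)) • b := by
    refine (inv_smul_smul₀ hab.ne' x).symm.trans ?_
    rw [areaForm_smul_eq_add o a b x]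
    module
  rw [h_eq]
  exact hM (hM.smul_mem_of_zero_mem h0 ha ⟨by positivity, hx_left.le⟩)
    (hM.smul_mem_of_zero_mem h0 hb ⟨by positivity, hx_right.le⟩) (by norm_num) (by norm_num)
    (by norm_num)

theorem eventually_smul_mem_of_areaForm_nonneg (hM : Convex ℝ M) (h0 : (0 : E) ∈ M) {a b : E}
    (ha : a ∈ M) (hb : b ∈ M) (hab : 0 < ω a b) (u : E) :
    ∀ᶠ z : ℝ × E in 𝓝[>] 0 ×ˢ 𝓝 u, 0 ≤ ω a z.2 → 0 ≤ ω z.2 b → z.1 • z.2 ∈ M := by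
  have h_tendsto : Tendsto (fun z : ℝ × E => z.1 • z.2) (𝓝[>] 0 ×ˢ 𝓝 u) (𝓝 0) := by
    rw [← zero_smul ℝ u]
    exact (tendsto_fst.mono_right nhdsWithin_le_nhds).smul tendsto_snd
  have h_pos : ∀ᶠ z : ℝ × E in 𝓝[>] 0 ×ˢ 𝓝 u, 0 < z.1 :=
    tendsto_fst.eventually self_mem_nhdsWithin
  filter_upwards [h_pos, h_tendsto.eventually (eventually_mem_of_areaForm_nonneg o hM h0 ha hb hab)]
    with z hz h_mem haz hzb
  refine h_mem ?_ ?_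
  · simpa using mul_nonneg hz.le haz
  · simpa using mul_nonneg hz.le hzb

theorem eventually_mem_of_zero_mem_openSegment (hK : Convex ℝ K) {p q y : E} (hp : p ∈ K)
    (hq : q ∈ K) (h0 : (0 : E) ∈ openSegment ℝ p q) (hy : y ∈ K) (hpy : 0 < ω p y) :
    ∀ᶠ x in 𝓝 0, 0 ≤ ω p x → x ∈ K := by
  have h0K : (0 : E) ∈ K := hK.openSegment_subset hp hq h0
  obtain ⟨a, b, ha, hb, -, hab⟩ := h0
  have h_area (x : E) : b * ω x q = a * ω p x := by
    have := congrArg (ω x) hab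
    simp only [map_add, map_smul, map_zero, smul_eq_mul] at this
    linear_combination this - a * o.areaForm_swap x p
  have hyq : 0 < ω y q := pos_of_mul_pos_right (h_area y ▸ mul_pos ha hpy) hb.le
  filter_upwards [eventually_mem_of_areaForm_nonneg o hK h0K hp hy hpy,
    eventually_mem_of_areaForm_nonneg o hK h0K hy hq hyq] with x hx_py hx_yq hpx
  rcases le_total 0 (ω x y) with hxy | hxy
  · exact hx_py hpx hxy
  · refine hx_yq (by rw [o.areaForm_swap]; exact neg_nonneg.2 hxy) ?_
    exact nonneg_of_mul_nonneg_right (h_area x ▸ mul_nonneg ha.le hpx) hb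

theorem eventually_mem_of_mem_hull (hK : Convex ℝ K) (hK_int : (interior K).Nonempty)
    (h0 : (0 : E) ∈ K) (hext : (0 : E) ∉ K.extremePoints ℝ) :
    ∀ᶠ x in 𝓝 0, x ∈ ConvexCone.hull ℝ K → x ∈ K := by
  obtain ⟨o⟩ := nonempty_orientation_of_fact_finrank_eq_two (E := E)
  obtain ⟨p, hp, q, hq, h0pq, hp0⟩ : ∃ p ∈ K, ∃ q ∈ K, 0 ∈ openSegment ℝ p q ∧ p ≠ 0 := by
    simpa [mem_extremePoints_iff_left, h0] using hext
  obtain ⟨y, hy, hpy⟩ := exists_mem_areaForm_ne_zero o hK_int hp0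
  wlog hpy_pos : 0 < o.areaForm p y generalizing o
  · have hpy_neg : o.areaForm p y < 0 := hpy.lt_of_le (not_lt.1 hpy_pos)
    exact this (-o) (by simpa [o.areaForm_neg_orientation])
      (by simpa [o.areaForm_neg_orientation])
  have h_upper := eventually_mem_of_zero_mem_openSegment o hK hp hq h0pq hy hpy_pos
  by_cases h_side : ∃ y' ∈ K, o.areaForm p y' < 0
  · obtain ⟨y', hy', hpy'⟩ := h_side
    have h_lower := eventually_mem_of_zero_mem_openSegment (-o) hK hp hq h0pq hy'
      (by simpa [o.areaForm_neg_orientation] using hpy')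
    filter_upwards [h_upper, h_lower] with x hx_upper hx_lower _
    simp only [o.areaForm_neg_orientation, LinearMap.neg_apply, neg_nonneg] at hx_lower
    exact (le_total 0 (o.areaForm p x)).elim hx_upper hx_lower
  · push Not at h_side
    filter_upwards [h_upper] with x hx hxK
    obtain ⟨r, hr, k, hk, rfl⟩ := (ConvexCone.mem_hull_of_convex hK).1 hxK
    refine hx ?_
    simpa using mul_nonneg hr.le (h_side k hk)

theorem eventually_smul_add_mem_of_areaForm_nonpos (hK : Convex ℝ K) {u v p : E} (hp : p ∈ K)
    (hup : u + p ∈ K) (hv : v ∈ K) (huv : 0 < ω u v) (hup_area : ω u p ≤ 0) :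
    ∀ᶠ z : ℝ × E in 𝓝[>] 0 ×ˢ 𝓝 u, 0 ≤ ω u z.2 → z.1 • z.2 + p ∈ K := by
  have huvp : 0 < ω u (v - p) := by rw [map_sub]; linarith
  have h_right : ∀ᶠ z : ℝ × E in 𝓝[>] 0 ×ˢ 𝓝 u, 0 < ω z.2 (v - p) :=
    tendsto_snd.eventually
      (((continuous_areaForm_left o (v - p)).tendsto u).eventually_const_lt huvp)
  filter_upwards [h_right, eventually_smul_mem_of_areaForm_nonneg o (hK.translate_preimage_left p)
    (by simpa) (by simpa) (show v - p ∈ _ by simpa) huvp u] with z hz_right hz hz_left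
  exact hz hz_left hz_right.le

theorem eventually_smul_add_mem_of_areaForm_pos (hK : Convex ℝ K) (h0 : (0 : E) ∈ K) {u v q : E}
    (hq : q ∈ K) (hvq : v + q ∈ K) (huv : 0 < ω u v) (huq_area : 0 < ω u q)
    (hvq_area : 0 < ω v q) :
    ∀ᶠ z : ℝ × E in 𝓝[>] 0 ×ˢ 𝓝 u, z.1 • z.2 + q ∈ K := by
  have h_left : ∀ᶠ z : ℝ × E in 𝓝[>] 0 ×ˢ 𝓝 u, 0 < ω z.2 q :=
    tendsto_snd.eventually
      (((continuous_areaForm_left o q).tendsto u).eventually_const_lt huq_area)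
  have h_right : ∀ᶠ z : ℝ × E in 𝓝[>] 0 ×ˢ 𝓝 u, 0 < ω z.2 v :=
    tendsto_snd.eventually (((continuous_areaForm_left o v).tendsto u).eventually_const_lt huv)
  have h_area (x : E) : ω (-q) x = ω x q := by
    rw [map_neg, LinearMap.neg_apply, ← o.areaForm_swap]
  filter_upwards [h_left, h_right, eventually_smul_mem_of_areaForm_nonneg o
    (hK.translate_preimage_left q) (by simpa) (show -q ∈ _ by simpa) hvq (h_area v ▸ hvq_area) u]
    with z hz_left hz_right hz
  exact hz (h_area z.2 ▸ hz_left.le) hz_right.le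

/-- The translation vectors of points of `S` close to `u` on its positive side accumulate at some
`p`. If `p` is not on the positive side of `u`, then `p` itself serves the whole positive side near
`u`; if it is, then so is the vector of some `v ∈ S` close to `u`, which serves all points near
`u`. -/
theorem exists_eventually_smul_add_mem_of_frequently (hK : Convex ℝ K) (hK_closed : IsClosed K)
    (h0 : (0 : E) ∈ K) (hP : IsCompact P) (hPK : P ⊆ K) (hSK : S ⊆ K)
    (hSP : ∀ v ∈ S, IsTIlluminated K P v) {u : E} (hu : ∃ᶠ v in 𝓝[S] u, 0 < ω u v) :
    ∃ p ∈ P, ∀ᶠ z : ℝ × E in 𝓝[>] 0 ×ˢ 𝓝 u, 0 ≤ ω u z.2 → z.1 • z.2 + p ∈ K := by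
  have : (𝓝[S] u ⊓ 𝓟 {v | 0 < ω u v}).NeBot := frequently_mem_iff_neBot.1 hu
  obtain ⟨U, hU⟩ := Ultrafilter.exists_le (𝓝[S] u ⊓ 𝓟 {v | 0 < ω u v})
  have hU_pos : ∀ᶠ v in (U : Filter E), 0 < ω u v := (hU.trans inf_le_right) (mem_principal_self _)
  have hU_S : ∀ᶠ v in (U : Filter E), v ∈ S := (hU.trans inf_le_left) self_mem_nhdsWithin
  have hU_tendsto : Tendsto (fun v => v) U (𝓝 u) := (hU.trans inf_le_left).trans nhdsWithin_le_nhds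
  choose! q hqP hqK using hSP
  obtain ⟨p, hpP, hp⟩ : ∃ p ∈ P, Tendsto q U (𝓝 p) :=
    hP.ultrafilter_le_nhds (U.map q) (tendsto_principal.2 (hU_S.mono hqP))
  rcases le_or_gt (ω u p) 0 with hup | hup
  · obtain ⟨v, hvS, huv⟩ := (hU_S.and hU_pos).exists
    have hup_mem : u + p ∈ K := hK_closed.mem_of_tendsto (hU_tendsto.add hp) (hU_S.mono hqK)
    exact ⟨p, hpP, eventually_smul_add_mem_of_areaForm_nonpos o hK (hPK hpP) hup_mem (hSK hvS)
      huv hup⟩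
  · have huq : ∀ᶠ v in (U : Filter E), 0 < ω u (q v) :=
      (((continuous_areaForm_right o u).tendsto p).comp hp).eventually_const_lt hup
    have hvq : ∀ᶠ v in (U : Filter E), 0 < ω v (q v) :=
      (((continuous_areaForm o).tendsto (u, p)).comp (hU_tendsto.prodMk_nhds hp)
        ).eventually_const_lt hup
    obtain ⟨v, hvS, huv, huq, hvq⟩ := (hU_S.and (hU_pos.and (huq.and hvq))).exists
    exact ⟨q v, hqP v hvS, (eventually_smul_add_mem_of_areaForm_pos o hK h0 (hPK (hqP v hvS))
      (hqK v hvS) huv huq hvq).mono fun _ hz _ => hz⟩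

theorem exists_eventually_smul_add_mem (hK : Convex ℝ K) (hK_closed : IsClosed K)
    (h0 : (0 : E) ∈ K) (hP : IsCompact P) (hPK : P ⊆ K) (hSK : S ⊆ K)
    (hSP : ∀ v ∈ S, IsTIlluminated K P v) {t : ℝ} (hSt : S ⊆ sphere 0 t) {u : E} (hu : u ∈ S) :
    ∃ p ∈ P, ∀ᶠ z : ℝ × E in 𝓝[>] 0 ×ˢ 𝓝[S] u, 0 ≤ ω u z.2 → z.1 • z.2 + p ∈ K := by
  by_cases h_freq : ∃ᶠ v in 𝓝[S] u, 0 < ω u v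
  · obtain ⟨p, hp, h_mem⟩ := exists_eventually_smul_add_mem_of_frequently o hK hK_closed h0 hP hPK
      hSK hSP h_freq
    exact ⟨p, hp, h_mem.filter_mono (prod_mono_right _ nhdsWithin_le_nhds)⟩
  have h_eq : ∀ᶠ v in 𝓝[S] u, 0 ≤ ω u v → v = u := by
    filter_upwards [not_frequently.1 h_freq, self_mem_nhdsWithin,
      nhdsWithin_le_nhds (eventually_eq_of_areaForm_eq_zero o u)] with v hv_le hvS hv hv_ge
    have h_norm : ‖v‖ = ‖u‖ := by
      rw [mem_sphere_zero_iff_norm.1 (hSt hvS), mem_sphere_zero_iff_norm.1 (hSt hu)]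
    exact hv h_norm (le_antisymm (not_lt.1 hv_le) hv_ge)
  obtain ⟨p, hp, hup⟩ := hSP u hu
  refine ⟨p, hp, ?_⟩
  filter_upwards [Filter.Eventually.prod_mk (Ioc_mem_nhdsGT (zero_lt_one (α := ℝ))) h_eq]
    with z hz hz_area
  rw [hz.2 hz_area, add_comm]
  exact hK.add_smul_mem (hPK hp) (by rwa [add_comm]) ⟨hz.1.1.le, hz.1.2⟩

theorem exists_finite_eventually_isTIlluminated_smul (hK : Convex ℝ K) (hK_closed : IsClosed K)
    (h0 : (0 : E) ∈ K) (hP : IsCompact P) (hPK : P ⊆ K) (hS : IsCompact S) (hSK : S ⊆ K)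
    (hSP : ∀ v ∈ S, IsTIlluminated K P v) {t : ℝ} (hSt : S ⊆ sphere 0 t) :
    ∃ F ⊆ P, F.Finite ∧ ∀ᶠ s : ℝ in 𝓝[>] 0, ∀ v ∈ S, IsTIlluminated K F (s • v) := by
  obtain ⟨o⟩ := nonempty_orientation_of_fact_finrank_eq_two (E := E)
  refine hS.induction_on (p := fun V => ∃ F ⊆ P, F.Finite ∧ ∀ᶠ s : ℝ in 𝓝[>] 0, ∀ v ∈ V,
    IsTIlluminated K F (s • v)) ⟨∅, by simp⟩ ?_ ?_ fun u hu => ?_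
  · rintro V W hVW ⟨F, hFP, hF, h⟩
    exact ⟨F, hFP, hF, h.mono fun s hs v hv => hs v (hVW hv)⟩
  · rintro V W ⟨F, hFP, hF, hFV⟩ ⟨G, hGP, hG, hGW⟩
    refine ⟨F ∪ G, union_subset hFP hGP, hF.union hG, ?_⟩
    filter_upwards [hFV, hGW] with s hsV hsW v hv
    exact hv.elim (fun h => (hsV v h).mono subset_union_left)
      fun h => (hsW v h).mono subset_union_right
  · obtain ⟨p, hp, h_pos⟩ :=
      exists_eventually_smul_add_mem o hK hK_closed h0 hP hPK hSK hSP hSt hu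
    obtain ⟨q, hq, h_neg⟩ :=
      exists_eventually_smul_add_mem (-o) hK hK_closed h0 hP hPK hSK hSP hSt hu
    have h_pair : ∀ᶠ z : ℝ × E in 𝓝[>] 0 ×ˢ 𝓝[S] u, IsTIlluminated K {p, q} (z.1 • z.2) := by
      filter_upwards [h_pos, h_neg] with z hz_pos hz_neg
      simp only [o.areaForm_neg_orientation, LinearMap.neg_apply, neg_nonneg] at hz_neg
      rcases le_total 0 (o.areaForm u z.2) with hz | hz
      · exact ⟨p, by simp, hz_pos hz⟩
      · exact ⟨q, by simp, hz_neg hz⟩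
    obtain ⟨_, hs, _, hv, h⟩ := eventually_prod_iff.1 h_pair
    exact ⟨_, hv, {p, q}, pair_subset hp hq, toFinite _, hs.mono fun s hs v hv => h hs hv⟩

theorem exists_finite_eventually_isTIlluminated (hK : Convex ℝ K) (hK_closed : IsClosed K)
    (h0 : (0 : E) ∈ K) (hcone : ∀ᶠ x in 𝓝 0, x ∈ ConvexCone.hull ℝ K → x ∈ K) (hP : IsCompact P)
    (hPK : P ⊆ K) (h : ∀ᶠ x in 𝓝[K] 0, IsTIlluminated K P x) :
    ∃ F ⊆ P, F.Finite ∧ ∀ᶠ x in 𝓝[K] 0, IsTIlluminated K F x := by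
  obtain ⟨t, ht, h_ball⟩ : ∃ t > 0, ∀ x ∈ closedBall (0 : E) t,
      (x ∈ ConvexCone.hull ℝ K → x ∈ K) ∧ (x ∈ K → IsTIlluminated K P x) :=
    nhds_basis_closedBall.eventually_iff.1 (hcone.and (eventually_nhdsWithin_iff.1 h))
  obtain ⟨F, hFP, hF, hF_sphere⟩ := exists_finite_eventually_isTIlluminated_smul hK hK_closed h0 hP
    hPK ((isCompact_sphere 0 t).inter_left hK_closed) inter_subset_left
    (fun v hv => (h_ball v (sphere_subset_closedBall hv.2)).2 hv.1) inter_subset_right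
  obtain ⟨p, hpP, hp⟩ := h.self_of_nhdsWithin h0
  refine ⟨insert p F, insert_subset hpP hFP, hF.insert p, ?_⟩
  have h_norm : Tendsto (fun x : E => ‖x‖ / t) (𝓝[≠] 0) (𝓝[>] 0) :=
    tendsto_nhdsWithin_iff.2 ⟨tendsto_nhdsWithin_of_tendsto_nhds
      (Continuous.tendsto' (by fun_prop) _ _ (by simp)),
      eventually_mem_nhdsWithin.mono fun x hx => div_pos (norm_pos_iff.2 hx) ht⟩
  have h_ne := eventually_nhdsWithin_iff.1 (h_norm.eventually hF_sphere)
  filter_upwards [nhdsWithin_le_nhds h_ne, self_mem_nhdsWithin] with x hx hxK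
  rcases eq_or_ne x 0 with rfl | hx0
  · exact ⟨p, mem_insert p F, hp⟩
  have hx_pos : 0 < ‖x‖ := norm_pos_iff.2 hx0
  have hv_sphere : (t / ‖x‖) • x ∈ sphere (0 : E) t := by
    simp [norm_smul, hx_pos.ne', ht.le]
  have hv_mem : (t / ‖x‖) • x ∈ K :=
    (h_ball _ (sphere_subset_closedBall hv_sphere)).1
      ((ConvexCone.hull ℝ K).smul_mem (by positivity) (ConvexCone.subset_hull hxK))
  have := (hx hx0 _ ⟨hv_mem, hv_sphere⟩).mono (subset_insert p F)
  rwa [smul_smul, div_mul_div_cancel₀ ht.ne', div_self hx_pos.ne', one_smul] at this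

theorem exists_finite_forall_isTIlluminated_of_zero_mem_convexHull (hK : Convex ℝ K)
    (hKc : IsCompact K) (hK_int : (interior K).Nonempty) {R : ℝ} (hR : 0 < R)
    (h0 : (0 : E) ∈ convexHull ℝ (K ∩ sphere 0 R))
    (h : ∀ᶠ x in 𝓝[K] 0, IsTIlluminated K (K ∩ sphere 0 R) x) :
    ∃ F ⊆ sphere (0 : E) R, F.Finite ∧ ∀ x ∈ K, IsTIlluminated K F x := by
  have h0K : (0 : E) ∈ K := convexHull_min inter_subset_left hK h0
  have h_ext : (0 : E) ∉ K.extremePoints ℝ := by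
    rw [hK.mem_extremePoints_iff_mem_sdiff_convexHull_sdiff]
    have h_ne : K ∩ sphere 0 R ⊆ K \ {0} := fun p hp => ⟨hp.1, ne_of_mem_sphere hp.2 hR.ne'⟩
    exact fun h_ext => h_ext.2 (convexHull_mono h_ne h0)
  obtain ⟨F, hF_sub, hF, hF_near⟩ := exists_finite_eventually_isTIlluminated hK hKc.isClosed h0K
    (eventually_mem_of_mem_hull hK hK_int h0K h_ext) (hKc.inter_right isClosed_sphere)
    inter_subset_left h
  obtain ⟨G, hG_sub, hG, hG_far⟩ :=
    exists_finite_forall_isTIlluminated_of_notMem hK hKc hK_int hR h0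
    (eventually_nhdsWithin_iff.1 hF_near)
  refine ⟨F ∪ G, union_subset (hF_sub.trans inter_subset_right) hG_sub, hF.union hG,
    fun x hx => ?_⟩
  by_cases hxF : x ∈ K → IsTIlluminated K F x
  · exact (hxF hx).mono subset_union_left
  · exact (hG_far x hx hxF).mono subset_union_right

end Planar

namespace IsCircumball

variable {K : Set (EuclideanSpace ℝ (Fin 2))} {c : EuclideanSpace ℝ (Fin 2)} {R : ℝ}

theorem exists_finite_subset_sphere_forall_isTIlluminated (hcirc : IsCircumball K c R)
    (hKc : IsCompact K) (hK : Convex ℝ K) (hK_int : (interior K).Nonempty)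
    (h : ∀ᶠ x in 𝓝[K] c, IsTIlluminated K (-c +ᵥ (K ∩ sphere c R)) x) :
    ∃ F ⊆ sphere 0 R, F.Finite ∧ ∀ x ∈ K, IsTIlluminated K F x := by
  have : Fact (Module.finrank ℝ (EuclideanSpace ℝ (Fin 2)) = 2) := ⟨by simp⟩
  have h_contact : (-c +ᵥ K) ∩ sphere 0 R = -c +ᵥ (K ∩ sphere c R) := by
    rw [vadd_set_inter, vadd_sphere, vadd_eq_add, neg_add_cancel]
  have h_center : 0 ∈ convexHull ℝ ((-c +ᵥ K) ∩ sphere 0 R) := by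
    rw [h_contact, convexHull_vadd, ← neg_add_cancel c]
    exact vadd_mem_vadd_set (hcirc.center_mem_convexHull hKc (hK_int.mono interior_subset))
  have h_near : ∀ᶠ x in 𝓝[-c +ᵥ K] 0, IsTIlluminated (-c +ᵥ K) ((-c +ᵥ K) ∩ sphere 0 R) x := by
    have h_shift : Tendsto (fun x => c + x) (𝓝[-c +ᵥ K] 0) (𝓝[K] c) := by
      refine tendsto_nhdsWithin_iff.2 ⟨tendsto_nhdsWithin_of_tendsto_nhds ?_, ?_⟩
      · exact Continuous.tendsto' (by fun_prop) _ _ (add_zero c)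
      · filter_upwards [self_mem_nhdsWithin] with x hx
        simpa [mem_vadd_set_iff_neg_vadd_mem] using hx
    filter_upwards [h_shift.eventually h] with x hx
    rwa [← IsTIlluminated.vadd_iff (-c), vadd_eq_add (-c) (c + x), neg_add_cancel_left,
      ← h_contact] at hx
  obtain ⟨F, hF_sub, hF, hFK⟩ := exists_finite_forall_isTIlluminated_of_zero_mem_convexHull
    (hK.vadd (-c)) (hKc.vadd (-c)) (by rw [interior_vadd]; exact hK_int.vadd_set)
    (hcirc.radius_pos hK_int) h_center h_near
  exact ⟨F, hF_sub, hF, fun x hx => (IsTIlluminated.vadd_iff (-c)).1 (hFK _ (vadd_mem_vadd_set hx))⟩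

end IsCircumball

/-- Theorem 4.2: a two-dimensional convex body `K ⊆ ℝ²` with circumball `B(c,R)` satisfies
`i(K,R(K)) < ∞` if and only if the translates `K + (c - x)`, `x ∈ K ∩ bd B(c,R)`, cover a
neighborhood of `c` in `K`. -/
theorem iq_at_circumradius_finite_iff_two_dim (K : Set (EuclideanSpace ℝ (Fin 2)))
    (hKc : IsCompact K) (hKconv : Convex ℝ K) (hKint : (interior K).Nonempty)
    (c : EuclideanSpace ℝ (Fin 2)) (R : ℝ) (hcirc : IsCircumball K c R) :
    iq K R < ⊤ ↔ ∃ δ : ℝ, 0 < δ ∧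
      K ∩ ball c δ ⊆ ⋃ x ∈ K ∩ sphere c R, (· + (c - x)) '' K := by
  rw [iq_lt_top_iff (hcirc.radius_pos hKint), exists_ball_subset_iUnion_translates_iff]
  constructor
  · rintro ⟨F, hF_sphere, hF, h⟩
    filter_upwards [nhdsWithin_le_nhds (IsTIlluminated.eventually_exists_mem hKc.isClosed hF c),
      self_mem_nhdsWithin] with x hx hxK
    obtain ⟨r, hr, hcr, hxr⟩ := hx (h x hxK)
    refine ⟨r, ⟨c + r, ⟨hcr, ?_⟩, neg_add_cancel_left c r⟩, hxr⟩
    simpa using hF_sphere hr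
  · exact hcirc.exists_finite_subset_sphere_forall_isTIlluminated hKc hKconv hKint
end

section
/- Let K ⊆ ℝ² be a two-dimensional convex body such that for some δ' > 0 one has K ∩ B°(c_K,δ') ⊆ ⋃_{x ∈ K ∩ bd(B(c_K,R(K)))} (K + (c_K − x)). Then there exist at most 12 points x_1,…,x_k ∈ K ∩ bd(B(c_K,R(K))) (k ≤ 12) and δ > 0 such that B°(c_K,δ) ⊆ ⋃_{i=1}^k (K + (c_K − x_i)). -/
open Metric Set
open scoped RealInnerProductSpace

open Filter Topology

/-! Choose `z` in the interior of `K - c` with nonnegative inner product against all of `K - c`. If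
`z ≠ 0` and `ε > 0`, then `x + ε • z` leaves the circumball for every contact point `x`, so no
translate `K + (c - x)` contains `c + ε • z`, which lies in `K` for small `ε`. Hence the hypothesis
forces `z = 0`, that is, `c ∈ interior K`, and the translates cover a full neighborhood of `c`. A
compactness argument over contact points and directions then yields a finite cover of any compact
family of directions that avoids `0`.

To reduce the number of translates, write `c` as a convex combination of at most three contact
points. From any other contact point, the chords to two of these three enclose an angle of at least
`π / 2`, so one of the directions `±e₀, ±e₁` is feasible there. Consequently the directions of an
edge `[d, d']` of the cross-polytope that such a point covers form an interval starting at `d` or at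
`d'`, and the longest interval from each endpoint suffices. This gives `3 + 4 * 2 = 11` translates.
-/

section ConvexHull

section Module

variable {E : Type*} [AddCommGroup E] [Module ℝ E] [FiniteDimensional ℝ E] {s : Set E}

lemma exists_finset_card_le_finrank_succ_mem_convexHull {y : E} (hy : y ∈ convexHull ℝ s) :
    ∃ t : Finset E, ↑t ⊆ s ∧ t.card ≤ Module.finrank ℝ E + 1 ∧ y ∈ convexHull ℝ (t : Set E) := by
  rw [convexHull_eq_union] at hy
  simp only [mem_iUnion] at hy
  obtain ⟨t, hts, ht, hyt⟩ := hy
  refine ⟨t, hts, ?_, hyt⟩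
  simpa using ht.card_le_finrank_succ.trans (by simpa using Submodule.finrank_le _)

lemma isCompact_convexHull_s15 [TopologicalSpace E] [ContinuousAdd E] [ContinuousSMul ℝ E]
    (hs : IsCompact s) : IsCompact (convexHull ℝ s) := by
  rcases s.eq_empty_or_nonempty with rfl | ⟨x₀, hx₀⟩
  · simp
  let combine (p : (Fin (Module.finrank ℝ E + 1) → ℝ) × (Fin (Module.finrank ℝ E + 1) → E)) : E :=
    ∑ i, p.1 i • p.2 i
  have hcombine : Continuous combine := by fun_prop
  suffices convexHull ℝ s = combine '' (stdSimplex ℝ _ ×ˢ univ.pi fun _ ↦ s) from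
    this ▸ ((isCompact_stdSimplex ℝ _).prod (isCompact_univ_pi fun _ ↦ hs)).image hcombine
  refine subset_antisymm (fun y hy ↦ ?_) ?_
  · obtain ⟨ι, _, z, w, hzs, hz, hw₀, hw₁, rfl⟩ := eq_pos_convex_span_of_mem_convexHull hy
    obtain ⟨e⟩ := Function.Embedding.nonempty_of_card_le
      (hz.card_le_finrank_succ.trans (by simpa using Submodule.finrank_le _) :
        Fintype.card ι ≤ Fintype.card (Fin (Module.finrank ℝ E + 1)))
    have hw_out (i) (hi : i ∉ range e) : Function.extend e w 0 i = 0 :=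
      Function.extend_apply' _ _ _ hi
    refine ⟨(Function.extend e w 0, Function.extend e z fun _ ↦ x₀), ⟨⟨fun i ↦ ?_, ?_⟩, ?_⟩, ?_⟩
    · by_cases hi : i ∈ range e
      · obtain ⟨j, rfl⟩ := hi
        simpa [e.injective.extend_apply] using (hw₀ j).le
      · exact (hw_out i hi).ge
    · rw [← hw₁]
      exact (Fintype.sum_of_injective e e.injective _ _ hw_out
        fun i ↦ (e.injective.extend_apply _ _ i).symm).symm
    · intro i _
      by_cases hi : i ∈ range e
      · obtain ⟨j, rfl⟩ := hi
        simpa [e.injective.extend_apply] using hzs (mem_range_self j)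
      · simpa [Function.extend_apply' _ _ _ hi] using hx₀
    · refine (Fintype.sum_of_injective e e.injective _ _ (fun i hi ↦ ?_) fun i ↦ ?_).symm
      · simp [hw_out i hi]
      · simp [e.injective.extend_apply]
  · rintro _ ⟨⟨w, f⟩, ⟨hw, hf⟩, rfl⟩
    exact (convex_convexHull ℝ s).sum_mem (fun i _ ↦ hw.1 i) hw.2
      fun i _ ↦ subset_convexHull ℝ s (hf i trivial)

end Module

lemma exists_finset_card_le_finrank_mem_convexHull {E : Type*} [NormedAddCommGroup E]
    [NormedSpace ℝ E] [FiniteDimensional ℝ E] {s : Set E} {y : E} (hy : y ∈ convexHull ℝ s)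
    (hy' : y ∉ interior (convexHull ℝ s)) :
    ∃ t : Finset E, ↑t ⊆ s ∧ t.card ≤ Module.finrank ℝ E ∧ y ∈ convexHull ℝ (t : Set E) := by
  classical
  obtain ⟨ι, _, z, w, hzs, hz, hw₀, hw₁, rfl⟩ := eq_pos_convex_span_of_mem_convexHull hy
  have hmem : ∑ i, w i • z i ∈ convexHull ℝ (range z) :=
    (convex_convexHull ℝ _).sum_mem (fun i _ ↦ (hw₀ i).le) hw₁
      fun i _ ↦ subset_convexHull ℝ _ (mem_range_self i)
  refine ⟨Finset.univ.image z, by simpa using hzs, ?_, by simpa using hmem⟩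
  by_contra! hcard
  have hι : Fintype.card ι = Module.finrank ℝ E + 1 := by
    have := hz.card_le_finrank_succ.trans (Nat.succ_le_succ (Submodule.finrank_le _))
    have := Finset.card_image_le (s := Finset.univ) (f := z)
    simp only [Finset.card_univ] at this
    omega
  let b : AffineBasis ι ℝ E := ⟨z, hz, hz.affineSpan_eq_top_iff_card_eq_finrank_add_one.2 hι⟩
  refine hy' (interior_mono (convexHull_mono hzs) ?_)
  rw [show range z = range b from rfl, b.interior_convexHull]
  intro i
  rw [← Finset.univ.affineCombination_eq_linear_combination z w hw₁]
  exact (hw₀ i).trans_eq (b.coord_apply_combination_of_mem (Finset.mem_univ i) hw₁).symm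

end ConvexHull

section Inner

variable {E : Type*} [NormedAddCommGroup E] [InnerProductSpace ℝ E]

lemma exists_mem_interior_forall_inner_nonneg [CompleteSpace E] {K : Set E} (hK : Convex ℝ K)
    (hint : (interior K).Nonempty) : ∃ z ∈ interior K, ∀ x ∈ K, 0 ≤ ⟪z, x⟫ := by
  let dual : Set E := {b | ∀ x ∈ K, 0 ≤ ⟪b, x⟫}
  -- Otherwise some `f = ⟪b, ·⟫` separates `interior K` from the cone `dual`; it is nonpositive on
  -- `K`, so `-b ∈ dual`, whereas `f` is bounded below on `dual`.
  by_contra! hdisj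
  have hdual : Convex ℝ dual := fun a ha b hb s t hs ht _ x hx ↦ by
    rw [inner_add_left, real_inner_smul_left, real_inner_smul_left]
    exact add_nonneg (mul_nonneg hs (ha x hx)) (mul_nonneg ht (hb x hx))
  obtain ⟨f, u, hfK, hfdual⟩ := geometric_hahn_banach_open hK.interior isOpen_interior hdual
    (disjoint_left.2 fun z hz hz' ↦
      let ⟨x, hx, hzx⟩ := hdisj z hz
      hzx.not_ge (hz' x hx))
  have hu : u ≤ 0 := by simpa using hfdual 0 fun x _ ↦ by simp
  let b := (InnerProductSpace.toDual ℝ E).symm f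
  have hb (x : E) : ⟪b, x⟫ = f x := InnerProductSpace.toDual_symm_apply
  have hfK' : ∀ x ∈ K, f x ≤ 0 := by
    have hsub : closure (interior K) ⊆ {x | f x ≤ 0} :=
      closure_minimal (fun x hx ↦ ((hfK x hx).trans_le hu).le)
        (isClosed_le f.continuous continuous_const)
    rw [hK.closure_interior_eq_closure_of_nonempty_interior hint] at hsub
    exact fun x hx ↦ hsub (subset_closure hx)
  have hneg (t : ℝ) (ht : 0 ≤ t) : u ≤ -t * ‖b‖ ^ 2 := by
    have hmem : -t • b ∈ dual := fun x hx ↦ by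
      rw [real_inner_smul_left, hb]
      exact mul_nonneg_of_nonpos_of_nonpos (neg_nonpos.2 ht) (hfK' x hx)
    simpa [← hb, real_inner_smul_right] using hfdual _ hmem
  obtain ⟨z, hz⟩ := hint
  have hb₀ : b ≠ 0 := fun h ↦ by
    have := hfK z hz
    rw [← hb, h, inner_zero_left] at this
    exact this.not_ge hu
  have := hneg ((1 - u) / ‖b‖ ^ 2) (div_nonneg (by linarith) (sq_nonneg _))
  rw [neg_mul, div_mul_cancel₀ _ (by positivity)] at this
  linarith
lemma dist_add_smul_lt {x c v : E} {R ε : ℝ} (hR : 0 ≤ R) (hx : dist x c ≤ R) (hε : 0 < ε)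
    (hεv : ε * ‖v‖ ^ 2 < 2 * ⟪v, x - c⟫) : dist x (c + ε • v) < R := by
  refine lt_of_pow_lt_pow_left₀ 2 hR ?_
  rw [dist_eq_norm] at hx ⊢
  calc ‖x - (c + ε • v)‖ ^ 2
      = ‖x - c‖ ^ 2 - ε * (2 * ⟪v, x - c⟫ - ε * ‖v‖ ^ 2) := by
        rw [← sub_sub, norm_sub_sq_real, real_inner_smul_right, norm_smul, real_inner_comm,
          mul_pow, Real.norm_eq_abs, sq_abs]
        ring
    _ < ‖x - c‖ ^ 2 := sub_lt_self _ (mul_pos hε (sub_pos.2 hεv))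
    _ ≤ R ^ 2 := by gcongr

lemma exists_forall_dist_lt_of_forall_inner_pos {K : Set E} {c v : E} {R : ℝ} (hK : IsCompact K)
    (hKR : K ⊆ closedBall c R) (hv : ∀ x ∈ K ∩ sphere c R, 0 < ⟪v, x - c⟫) :
    ∃ c', ∀ x ∈ K, dist x c' < R := by
  suffices ∀ᶠ ε in 𝓝 (0 : ℝ), ∀ x ∈ K, 0 < ε → x ∈ K → dist x (c + ε • v) < R by
    obtain ⟨ε, hε, hε₀⟩ := ((this.filter_mono nhdsWithin_le_nhds).and
      (eventually_mem_nhdsWithin (s := Ioi 0))).exists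
    exact ⟨c + ε • v, fun x hx ↦ hε x hx hε₀ hx⟩
  refine hK.eventually_forall_of_forall_eventually fun x hx ↦ ?_
  rcases (mem_closedBall.1 (hKR hx)).lt_or_eq with hxR | hxR
  · have : ∀ᶠ p : ℝ × E in 𝓝 (0, x), dist p.2 (c + p.1 • v) < R :=
      ContinuousAt.eventually_lt (by fun_prop) (by fun_prop) (by simpa using hxR)
    exact this.mono fun p hp _ _ ↦ hp
  · have : ∀ᶠ p : ℝ × E in 𝓝 (0, x), p.1 * ‖v‖ ^ 2 < 2 * ⟪v, p.2 - c⟫ :=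
      ContinuousAt.eventually_lt (by fun_prop) (by fun_prop) (by simpa using hv x ⟨hx, hxR⟩)
    exact this.mono fun p hp hp₀ hpK ↦
      dist_add_smul_lt (dist_nonneg.trans (hKR hx)) (hKR hpK) hp₀ hp

lemma mem_interior_of_translates_cover [CompleteSpace E] {K : Set E} {c : E} {R : ℝ}
    (hK : Convex ℝ K) (hint : (interior K).Nonempty) (hc : c ∈ K) (hKR : K ⊆ closedBall c R)
    (hcov : ∀ᶠ y in 𝓝[K] c, ∃ x ∈ K ∩ sphere c R, x + (y - c) ∈ K) : c ∈ interior K := by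
  have hpre : interior ((· + c) ⁻¹' K) = (· + c) ⁻¹' interior K :=
    ((Homeomorph.addRight c).preimage_interior K).symm
  obtain ⟨z, hz, hzK⟩ := exists_mem_interior_forall_inner_nonneg (hK.translate_preimage_left c)
    (hpre ▸ hint.preimage (add_right_surjective c))
  rw [hpre] at hz
  have htendsto : Tendsto (fun ε : ℝ ↦ c + ε • z) (𝓝[>] 0) (𝓝[K] c) := by
    refine tendsto_nhdsWithin_iff.2 ⟨?_, ?_⟩
    · have : Continuous fun ε : ℝ ↦ c + ε • z := by fun_prop
      simpa using (this.tendsto 0).mono_left nhdsWithin_le_nhds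
    · filter_upwards [Ioc_mem_nhdsGT zero_lt_one] with ε hε
      have := hK.add_smul_sub_mem hc (interior_subset hz) ⟨hε.1.le, hε.2⟩
      simpa using this
  obtain ⟨ε, ⟨x, ⟨hxK, hxR⟩, hx⟩, hε⟩ :=
    ((htendsto.eventually hcov).and self_mem_nhdsWithin).exists
  suffices z = 0 by simpa [this] using hz
  by_contra hz₀
  have hxz : 0 ≤ ⟪z, x - c⟫ := hzK (x - c) (by simpa using hxK)
  have hlt := dist_add_smul_lt (dist_nonneg.trans (hKR hx)) (hKR hx) hε (v := z) (by
    have : 0 < ε * ‖z‖ ^ 2 := mul_pos hε (by positivity)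
    rw [add_sub_cancel_left, add_sub_right_comm, inner_add_right, real_inner_smul_right,
      real_inner_self_eq_norm_sq]
    linarith)
  rw [add_sub_cancel_left, dist_add_right] at hlt
  exact hlt.ne hxR

lemma inner_sub_neg_of_norm_eq {x y : E} (hxy : ‖x‖ = ‖y‖) (hne : x ≠ y) :
    ⟪x, y - x⟫ < 0 := by
  have hpos : 0 < ‖x - y‖ ^ 2 := by have := sub_ne_zero.2 hne; positivity
  rw [norm_sub_sq_real, ← hxy] at hpos
  rw [inner_sub_right, real_inner_self_eq_norm_sq]
  linarith

lemma inner_sub_sub_nonpos_of_smul_mem_segment {x y z : E} {r l : ℝ} (hx : ‖x‖ = r) (hy : ‖y‖ = r)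
    (hz : ‖z‖ = r) (hl₀ : 0 ≤ l) (hl₁ : l ≤ 1) (hl : l • x ∈ segment ℝ y z) :
    ⟪y - x, z - x⟫ ≤ 0 := by
  have hyz : ‖y + z‖ ^ 2 = 2 * (r ^ 2 + ⟪y, z⟫) := by rw [norm_add_sq_real, hy, hz]; ring
  have hexp : ⟪y - x, z - x⟫ = r ^ 2 + ⟪y, z⟫ - ⟪x, y + z⟫ := by
    simp only [inner_sub_left, inner_sub_right, inner_add_right, real_inner_self_eq_norm_sq, hx,
      real_inner_comm x y]
    ring
  have hlx : l * ⟪x, y + z⟫ = r ^ 2 + ⟪y, z⟫ := by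
    obtain ⟨a, b, -, -, hab, hlx⟩ := hl
    rw [← real_inner_smul_left, ← hlx]
    simp only [inner_add_left, inner_add_right, real_inner_smul_left, real_inner_self_eq_norm_sq,
      hy, hz, real_inner_comm y z]
    linear_combination (r ^ 2 + ⟪y, z⟫) * hab
  rcases hl₀.eq_or_lt with rfl | hl₀
  · have : y + z = 0 := by
      rw [← norm_eq_zero, ← sq_eq_zero_iff, hyz, ← hlx, zero_mul, mul_zero]
    rw [hexp, ← hlx, this, inner_zero_right, mul_zero, sub_zero]
  · refine nonpos_of_mul_nonpos_right ?_ hl₀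
    calc l * ⟪y - x, z - x⟫ = -((1 - l) * (‖y + z‖ ^ 2 / 2)) := by
          rw [hexp, hyz]; linear_combination -hlx
      _ ≤ 0 := neg_nonpos.2 (mul_nonneg (sub_nonneg.2 hl₁) (by positivity))

end Inner

section Plane

variable {E : Type*} [NormedAddCommGroup E] [InnerProductSpace ℝ E]

lemma exists_mem_segment_of_notMem_interior [FiniteDimensional ℝ E]
    (hE : Module.finrank ℝ E = 2) {s : Set E} {p : E}
    (hp : p ∈ convexHull ℝ s) (hp' : p ∉ interior (convexHull ℝ s)) :
    ∃ y ∈ s, ∃ z ∈ s, p ∈ segment ℝ y z := by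
  classical
  obtain ⟨t, hts, ht, hpt⟩ := exists_finset_card_le_finrank_mem_convexHull hp hp'
  rw [hE] at ht
  interval_cases h : t.card
  · simp [Finset.card_eq_zero.1 h] at hpt
  · obtain ⟨y, rfl⟩ := Finset.card_eq_one.1 h
    exact ⟨y, hts (by simp), y, hts (by simp), by simpa using hpt⟩
  · obtain ⟨y, z, -, rfl⟩ := Finset.card_eq_two.1 h
    exact ⟨y, hts (by simp), z, hts (by simp), by simpa [convexHull_pair] using hpt⟩

lemma exists_inner_sub_sub_nonpos (hE : Module.finrank ℝ E = 2) {C : Set E} {c x : E} {R : ℝ}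
    (hC : IsCompact C) (hCR : C ⊆ sphere c R) (hc : c ∈ convexHull ℝ C) (hx : x ∈ sphere c R) :
    ∃ y ∈ C, ∃ z ∈ C, ⟪y - x, z - x⟫ ≤ 0 := by
  have : FiniteDimensional ℝ E := .of_finrank_pos (by omega)
  have : Nontrivial E := Module.nontrivial_of_finrank_pos (R := ℝ) (by omega)
  let ray (l : ℝ) : E := c + l • (x - c)
  have hray : Continuous ray := by fun_prop
  -- The last point of the hull on the segment from `c` to `x` lies on an edge `[y, z]`.
  obtain ⟨l, ⟨⟨hl₀, hl₁⟩, hl⟩, hmax⟩ := (isCompact_Icc.inter_right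
    ((isCompact_convexHull_s15 hC).isClosed.preimage hray)).exists_isGreatest
      ⟨0, ⟨le_rfl, zero_le_one⟩, by simpa [ray] using hc⟩
  have hl_int : ray l ∉ interior (convexHull ℝ C) := by
    intro hint
    rcases hl₁.lt_or_eq with hl₁ | rfl
    · have hnear := (hray.tendsto l).eventually (mem_interior_iff_mem_nhds.1 hint)
      obtain ⟨l', hl', hl'₁⟩ :=
        ((hnear.filter_mono nhdsWithin_le_nhds).and (Ioc_mem_nhdsGT hl₁)).exists
      exact hl'₁.1.not_ge (hmax ⟨⟨hl₀.trans hl'₁.1.le, hl'₁.2⟩, hl'⟩)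
    · have hsub : convexHull ℝ C ⊆ closedBall c R :=
        convexHull_min (hCR.trans sphere_subset_closedBall) (convex_closedBall c R)
      have := interior_mono hsub hint
      rw [interior_closedBall', mem_ball] at this
      exact this.ne (by simpa [ray, dist_eq_norm] using hx)
  obtain ⟨y, hy, z, hz, hyz⟩ := exists_mem_segment_of_notMem_interior hE hl hl_int
  refine ⟨y, hy, z, hz, ?_⟩
  rw [← sub_sub_sub_cancel_right y x c, ← sub_sub_sub_cancel_right z x c]
  refine inner_sub_sub_nonpos_of_smul_mem_segment (mem_sphere_iff_norm.1 hx)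
    (mem_sphere_iff_norm.1 (hCR hy)) (mem_sphere_iff_norm.1 (hCR hz)) hl₀ hl₁ ?_
  rw [← mem_segment_translate ℝ c]
  simpa [ray] using hyz

end Plane

section Circumball

variable {n : ℕ} {K : Set (EuclideanSpace ℝ (Fin n))} {c : EuclideanSpace ℝ (Fin n)} {R : ℝ}

lemma IsCircumball.nonempty (h : IsCircumball K c R) : K.Nonempty := by
  rw [nonempty_iff_ne_empty]
  rintro rfl
  linarith [h.2 c (R - 1) (empty_subset _)]

lemma IsCircumball.mem_convexHull (h : IsCircumball K c R) (hK : IsCompact K) :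
    c ∈ convexHull ℝ (K ∩ sphere c R) := by
  by_contra hc
  obtain ⟨f, u, hfc, hfu⟩ := geometric_hahn_banach_point_closed (convex_convexHull ℝ _)
    (isCompact_convexHull_s15 (hK.inter_right isClosed_sphere)).isClosed hc
  obtain ⟨c', hc'⟩ := exists_forall_dist_lt_of_forall_inner_pos hK h.1
    (v := (InnerProductSpace.toDual ℝ _).symm f) fun x hx ↦ by
      rw [InnerProductSpace.toDual_symm_apply, map_sub, sub_pos]
      exact hfc.trans (hfu x (subset_convexHull ℝ _ hx))
  obtain ⟨x, hx, hmax⟩ := hK.exists_isMaxOn h.nonempty (by fun_prop : ContinuousOn (dist · c') K)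
  exact (hc' x hx).not_ge (h.2 c' (dist x c') fun y hy ↦ hmax hy)

end Circumball

section FeasibleDir

variable {E : Type*} [AddCommGroup E] [Module ℝ E] {K : Set E} {x v w d d' : E}

/-- `v` is a feasible direction of `K` at `x`: all sufficiently small positive multiples of `v`,
attached at `x`, end in `K`. -/
def IsFeasibleDir (K : Set E) (x v : E) : Prop :=
  ∀ᶠ ε in 𝓝[>] (0 : ℝ), x + ε • v ∈ K

lemma add_smul_mem_of_le (hK : Convex ℝ K) (hx : x ∈ K) {r δ : ℝ} (hr : 0 ≤ r) (hrδ : r ≤ δ)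
    (h : x + δ • v ∈ K) : x + r • v ∈ K := by
  rcases hr.eq_or_lt with rfl | hr
  · simpa using hx
  have hδ : 0 < δ := hr.trans_le hrδ
  have := hK.add_smul_mem hx h ⟨div_nonneg hr.le hδ.le, (div_le_one hδ).2 hrδ⟩
  rwa [smul_smul, div_mul_cancel₀ _ hδ.ne'] at this

namespace IsFeasibleDir

lemma of_add_smul_mem (hK : Convex ℝ K) (hx : x ∈ K) {δ : ℝ} (hδ : 0 < δ) (h : x + δ • v ∈ K) :
    IsFeasibleDir K x v := by
  filter_upwards [Ioc_mem_nhdsGT hδ] with ε hε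
  exact add_smul_mem_of_le hK hx hε.1.le hε.2 h

lemma of_add_mem (hK : Convex ℝ K) (hx : x ∈ K) (h : x + v ∈ K) : IsFeasibleDir K x v :=
  of_add_smul_mem hK hx one_pos (by rwa [one_smul])

lemma sub_of_mem (hK : Convex ℝ K) (hx : x ∈ K) (hv : v ∈ K) : IsFeasibleDir K x (v - x) :=
  of_add_mem hK hx (by rwa [add_sub_cancel])

lemma smul (hx : x ∈ K) (hv : IsFeasibleDir K x v) {t : ℝ} (ht : 0 ≤ t) :
    IsFeasibleDir K x (t • v) := by
  rcases ht.eq_or_lt with rfl | ht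
  · exact .of_forall fun _ ↦ by simpa using hx
  filter_upwards [eventually_nhdsGT_zero_mul_left ht hv] with ε hε
  rwa [smul_smul, mul_comm]

lemma or_neg_of_smul {t : ℝ} (hx : x ∈ K) (ht : t ≠ 0) (hv : IsFeasibleDir K x (t • v)) :
    IsFeasibleDir K x v ∨ IsFeasibleDir K x (-v) := by
  rcases ht.lt_or_gt with ht | ht
  · right
    have := hv.smul hx (inv_nonneg.2 (neg_nonneg.2 ht.le))
    rwa [inv_neg, neg_smul, inv_smul_smul₀ ht.ne] at this
  · left
    have := hv.smul hx (inv_nonneg.2 ht.le)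
    rwa [inv_smul_smul₀ ht.ne'] at this

lemma add (hK : Convex ℝ K) (hx : x ∈ K) (hv : IsFeasibleDir K x v) (hw : IsFeasibleDir K x w) :
    IsFeasibleDir K x (v + w) := by
  obtain ⟨ε, ⟨hεv, hεw⟩, hε⟩ := ((hv.and hw).and eventually_mem_nhdsWithin).exists
  refine of_add_smul_mem hK hx (half_pos hε) ?_
  convert hK.midpoint_mem hεv hεw using 1
  rw [midpoint_eq_smul_add, invOf_eq_inv]
  module

lemma of_mem_segment_of_neg (hK : Convex ℝ K) (hx : x ∈ K) (hv : IsFeasibleDir K x v)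
    (hvd : v ∈ segment ℝ d d') (hd : IsFeasibleDir K x (-d)) :
    IsFeasibleDir K x d ∨ IsFeasibleDir K x d' := by
  obtain ⟨a, b, ha, hb, hab, rfl⟩ := hvd
  rcases hb.eq_or_lt with rfl | hb
  · left
    simpa [show a = 1 by simpa using hab] using hv
  · right
    have := (hv.add hK hx (hd.smul hx ha)).smul hx (inv_nonneg.2 hb.le)
    rwa [smul_neg, add_neg_cancel_comm, inv_smul_smul₀ hb.ne'] at this

lemma eventually_forall_add_smul_mem (hK : Convex ℝ K) (hx : x ∈ K) (hv : IsFeasibleDir K x v)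
    (hw : IsFeasibleDir K x w) :
    ∀ᶠ δ in 𝓝[>] (0 : ℝ), ∀ a b : ℝ, 0 ≤ a → 0 ≤ b → a + b ≤ 1 → x + δ • (a • v + b • w) ∈ K := by
  filter_upwards [hv, hw] with δ hδv hδw a b ha hb hab
  have := hK.sum_mem (t := Finset.univ) (w := ![1 - (a + b), a, b])
    (z := ![x, x + δ • v, x + δ • w]) (by simp [Fin.forall_fin_succ, ha, hb, hab])
    (by simp [Fin.sum_univ_three, add_assoc]) (by simp [Fin.forall_fin_succ, hx, hδv, hδw])
  convert this using 1
  simp [Fin.sum_univ_three]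
  module

end IsFeasibleDir

end FeasibleDir

section Axes

lemma exists_nonneg_mul_add_mul_eq_zero {p q : ℝ} (h : p * q ≤ 0) :
    ∃ a b : ℝ, 0 ≤ a ∧ 0 ≤ b ∧ 0 < a + b ∧ a * p + b * q = 0 := by
  rcases eq_or_ne p 0 with rfl | hp
  · exact ⟨1, 0, by simp⟩
  refine ⟨|q|, |p|, abs_nonneg q, abs_nonneg p, by positivity, ?_⟩
  rcases mul_nonpos_iff.1 h with ⟨hp, hq⟩ | ⟨hp, hq⟩
  · rw [abs_of_nonneg hp, abs_of_nonpos hq]; ring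
  · rw [abs_of_nonpos hp, abs_of_nonneg hq]; ring

variable {K : Set (EuclideanSpace ℝ (Fin 2))} {c x v w : EuclideanSpace ℝ (Fin 2)} {R : ℝ}

lemma IsFeasibleDir.exists_axis (hK : Convex ℝ K) (hx : x ∈ K) (hv : IsFeasibleDir K x v)
    (hw : IsFeasibleDir K x w) (hvw : ⟪v, w⟫ ≤ 0) {p : EuclideanSpace ℝ (Fin 2)}
    (hpv : ⟪p, v⟫ < 0) (hpw : ⟪p, w⟫ < 0) :
    ∃ i, IsFeasibleDir K x (EuclideanSpace.single i 1) ∨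
      IsFeasibleDir K x (-EuclideanSpace.single i 1) := by
  obtain ⟨i, hi⟩ : ∃ i, v i * w i ≤ 0 := by
    by_contra! hpos
    have : 0 < ⟪v, w⟫ := by
      rw [PiLp.inner_apply]
      exact Finset.sum_pos (fun i _ ↦ by simpa [mul_comm] using hpos i) Finset.univ_nonempty
    exact this.not_ge hvw
  -- Some nonnegative combination of `v` and `w` loses its `i`-th coordinate; pairing with `p` shows
  -- that it does not vanish.
  obtain ⟨a, b, ha, hb, hab, hi⟩ := exists_nonneg_mul_add_mul_eq_zero hi
  have hu := (hv.smul hx ha).add hK hx (hw.smul hx hb)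
  set u := a • v + b • w
  have hu₀ : ⟪p, u⟫ < 0 := by
    rw [inner_add_right, real_inner_smul_right, real_inner_smul_right]
    rcases ha.eq_or_lt with rfl | ha
    · rw [zero_add] at hab
      simpa using mul_neg_of_pos_of_neg hab hpw
    · exact add_neg_of_neg_of_nonpos (mul_neg_of_pos_of_neg ha hpv)
        (mul_nonpos_of_nonneg_of_nonpos hb hpw.le)
  obtain ⟨j, t, hj⟩ : ∃ (j : Fin 2) (t : ℝ), u = t • EuclideanSpace.single j 1 := by
    refine ⟨1 - i, u (1 - i), PiLp.ext fun k ↦ ?_⟩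
    fin_cases i <;> fin_cases k <;> simp_all [u]
  rw [hj] at hu hu₀
  exact ⟨j, hu.or_neg_of_smul hx fun ht ↦ by simp [ht] at hu₀⟩

lemma exists_finset_card_le_three_isFeasibleDir_axis (hK : Convex ℝ K)
    (hc : c ∈ convexHull ℝ (K ∩ sphere c R)) :
    ∃ C : Finset (EuclideanSpace ℝ (Fin 2)), ↑C ⊆ K ∩ sphere c R ∧ C.card ≤ 3 ∧
      ∀ x ∈ K ∩ sphere c R, x ∉ C → ∃ i, IsFeasibleDir K x (EuclideanSpace.single i 1) ∨
        IsFeasibleDir K x (-EuclideanSpace.single i 1) := by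
  obtain ⟨C, hCS, hC, hcC⟩ := exists_finset_card_le_finrank_succ_mem_convexHull hc
  rw [finrank_euclideanSpace_fin] at hC
  refine ⟨C, hCS, hC, fun x hx hxC ↦ ?_⟩
  obtain ⟨y, hy, z, hz, hyz⟩ := exists_inner_sub_sub_nonpos finrank_euclideanSpace_fin
    C.finite_toSet.isCompact (hCS.trans inter_subset_right) hcC hx.2
  have hneg (y) (hy : y ∈ C) : ⟪x - c, y - x⟫ < 0 := by
    rw [← sub_sub_sub_cancel_right y x c]
    refine inner_sub_neg_of_norm_eq ?_ fun h ↦ hxC (sub_left_injective h ▸ hy)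
    rw [mem_sphere_iff_norm.1 hx.2, mem_sphere_iff_norm.1 (hCS hy).2]
  exact (IsFeasibleDir.sub_of_mem hK hx.1 (hCS hy).1).exists_axis hK hx.1
    (IsFeasibleDir.sub_of_mem hK hx.1 (hCS hz).1) hyz (hneg y hy) (hneg z hz)

end Axes

section FiniteCover

variable {E : Type*} [AddCommGroup E] [Module ℝ E] {K S A B : Set E}

/-- Finitely many points `x ∈ S` suffice for the translates `K - x` to cover all sufficiently
small positive multiples `δ • A` of `A`. -/
def HasFiniteCover (K S A : Set E) : Prop :=
  ∃ F : Finset E, ↑F ⊆ S ∧ ∀ᶠ δ in 𝓝[>] (0 : ℝ), ∀ u ∈ A, ∃ x ∈ F, x + δ • u ∈ K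

namespace HasFiniteCover

lemma empty : HasFiniteCover K S ∅ := ⟨∅, by simp⟩

lemma mono (hB : HasFiniteCover K S B) (hAB : A ⊆ B) : HasFiniteCover K S A := by
  obtain ⟨F, hFS, hF⟩ := hB
  exact ⟨F, hFS, hF.mono fun δ hδ u hu ↦ hδ u (hAB hu)⟩

lemma union (hA : HasFiniteCover K S A) (hB : HasFiniteCover K S B) :
    HasFiniteCover K S (A ∪ B) := by
  classical
  obtain ⟨F, hFS, hF⟩ := hA
  obtain ⟨G, hGS, hG⟩ := hB
  refine ⟨F ∪ G, by simp [hFS, hGS], ?_⟩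
  filter_upwards [hF, hG] with δ hδF hδG
  rintro u (hu | hu)
  · obtain ⟨x, hx, hxu⟩ := hδF u hu
    exact ⟨x, Finset.mem_union_left _ hx, hxu⟩
  · obtain ⟨x, hx, hxu⟩ := hδG u hu
    exact ⟨x, Finset.mem_union_right _ hx, hxu⟩

lemma of_smul {t : ℝ} (ht : 0 < t) (hA : HasFiniteCover K S ((t • ·) '' A)) :
    HasFiniteCover K S A := by
  obtain ⟨F, hFS, hF⟩ := hA
  refine ⟨F, hFS, ?_⟩
  filter_upwards [eventually_nhdsGT_zero_mul_left (inv_pos.2 ht) hF] with δ hδ u hu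
  obtain ⟨x, hx, hxu⟩ := hδ (t • u) (mem_image_of_mem _ hu)
  refine ⟨x, hx, ?_⟩
  rwa [mul_comm, mul_smul, inv_smul_smul₀ ht.ne'] at hxu

end HasFiniteCover

end FiniteCover

section Cross

/-- The cross product `det (u, v)` in the plane, whose sign tells on which side of the line `ℝ u`
the vector `v` lies. -/
def planarCross (u v : EuclideanSpace ℝ (Fin 2)) : ℝ := u 0 * v 1 - u 1 * v 0

variable {u : EuclideanSpace ℝ (Fin 2)}

@[fun_prop]
lemma continuous_planarCross_comp {X : Type*} [TopologicalSpace X]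
    {f g : X → EuclideanSpace ℝ (Fin 2)} (hf : Continuous f) (hg : Continuous g) :
    Continuous fun x ↦ planarCross (f x) (g x) := by
  unfold planarCross
  fun_prop

lemma planarCross_self (u : EuclideanSpace ℝ (Fin 2)) : planarCross u u = 0 := by
  simp [planarCross, mul_comm]

lemma planarCross_swap (u v : EuclideanSpace ℝ (Fin 2)) : planarCross u v = -planarCross v u := by
  simp only [planarCross]; ring

lemma planarCross_smul_eq_add (u v w : EuclideanSpace ℝ (Fin 2)) :
    planarCross u w • v = planarCross v w • u + planarCross u v • w := by
  ext i
  fin_cases i <;> simp [planarCross] <;> ring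

lemma exists_mem_planarCross_ne_zero {K : Set (EuclideanSpace ℝ (Fin 2))}
    (hK : (interior K).Nonempty) (hu : u ≠ 0) (x : EuclideanSpace ℝ (Fin 2)) :
    ∃ z ∈ K, planarCross u (z - x) ≠ 0 := by
  by_contra! h
  obtain ⟨z, hz⟩ := hK
  have hline (w : EuclideanSpace ℝ (Fin 2)) : planarCross u w = 0 := by
    have : ∀ᶠ ε in 𝓝[≠] (0 : ℝ), z + ε • w ∈ K := by
      have hcont : Continuous fun ε : ℝ ↦ z + ε • w := by fun_prop
      refine (hcont.tendsto 0).eventually ?_ |>.filter_mono nhdsWithin_le_nhds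
      simpa using mem_interior_iff_mem_nhds.1 hz
    obtain ⟨ε, hε, hε₀⟩ := (this.and eventually_mem_nhdsWithin).exists
    have h₁ := h _ hε
    have h₂ := h z (interior_subset hz)
    have : ε * planarCross u w = 0 := by
      simp only [planarCross, PiLp.sub_apply, PiLp.add_apply, PiLp.smul_apply,
        smul_eq_mul] at h₁ h₂ ⊢
      linear_combination h₁ - h₂
    exact (mul_eq_zero.1 this).resolve_left hε₀
  refine hu (PiLp.ext fun i ↦ ?_)
  have h₀ := hline (EuclideanSpace.single 0 1)
  have h₁ := hline (EuclideanSpace.single 1 1)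
  fin_cases i <;> simp_all [planarCross]

end Cross

section Covering

variable {K S A : Set (EuclideanSpace ℝ (Fin 2))} {x z u v w : EuclideanSpace ℝ (Fin 2)}
  {σ : ℝ}

lemma IsFeasibleDir.of_planarCross (hK : Convex ℝ K) (hx : x ∈ K) (hv : IsFeasibleDir K x v)
    (hw : IsFeasibleDir K x w) (hvw : 0 < σ * planarCross v w) (huw : 0 ≤ σ * planarCross u w)
    (hvu : 0 ≤ σ * planarCross v u) : IsFeasibleDir K x u := by
  have := ((hv.smul hx huw).add hK hx (hw.smul hx hvu)).smul hx (inv_nonneg.2 hvw.le)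
  rwa [mul_smul, mul_smul, ← smul_add, ← planarCross_smul_eq_add, ← mul_smul σ,
    inv_smul_smul₀ hvw.ne'] at this

lemma IsFeasibleDir.exists_nhds_hasFiniteCover (hK : Convex ℝ K) (hxK : x ∈ K) (hxS : x ∈ S)
    (hv : IsFeasibleDir K x v) (hw : IsFeasibleDir K x w) (hvw : 0 < σ * planarCross v w) :
    ∃ U ∈ 𝓝 v, HasFiniteCover K S {u ∈ U | 0 ≤ σ * planarCross v u} := by
  have hvw₀ : planarCross v w ≠ 0 := right_ne_zero_of_mul hvw.ne'
  -- `x + δ • v` is the midpoint of an edge of the triangle `x, x + δ • 2 • v, x + δ • w`.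
  let a (u : EuclideanSpace ℝ (Fin 2)) : ℝ := planarCross u w / (2 * planarCross v w)
  let b (u : EuclideanSpace ℝ (Fin 2)) : ℝ := planarCross v u / planarCross v w
  have hcomb (u) : a u • (2 : ℝ) • v + b u • w = u := by
    calc a u • (2 : ℝ) • v + b u • w
        = (planarCross v w)⁻¹ • (planarCross u w • v + planarCross v u • w) := by
          simp only [a, b]; module
      _ = u := by rw [← planarCross_smul_eq_add, inv_smul_smul₀ hvw₀]
  have hav : a v = 1 / 2 := by simp only [a]; field_simp
  have hbv : b v = 0 := by simp [b, planarCross_self]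
  have ha : Continuous a := by fun_prop
  have hb : Continuous b := by fun_prop
  have hnhds : ∀ᶠ u in 𝓝 v, 0 < a u ∧ a u + b u < 1 :=
    (continuousAt_const.eventually_lt ha.continuousAt (by norm_num [hav])).and
      ((ha.add hb).continuousAt.eventually_lt continuousAt_const (by norm_num [hav, hbv]))
  refine ⟨_, hnhds, {x}, by simpa using hxS, ?_⟩
  filter_upwards [(hv.smul hxK zero_le_two).eventually_forall_add_smul_mem hK hxK hw] with δ hδ
  rintro u ⟨⟨hau, hab⟩, hvu⟩
  have hbu : 0 ≤ b u := by
    have := div_nonneg hvu hvw.le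
    rwa [mul_div_mul_left _ _ (left_ne_zero_of_mul hvw.ne')] at this
  exact ⟨x, Finset.mem_singleton_self x, hcomb u ▸ hδ _ _ hau.le hbu hab.le⟩

lemma exists_nhds_prod_hasFiniteCover_of_neg (hK : Convex ℝ K) (hSK : S ⊆ K) (hx : x ∈ S)
    (hu : IsFeasibleDir K x u) (hz : z ∈ K) (hneg : σ * planarCross u (z - x) < 0) :
    ∃ V ∈ 𝓝 x, ∃ U ∈ 𝓝 u,
      HasFiniteCover K S {u' ∈ U | 0 ≤ σ * planarCross u u' ∧ ∃ y ∈ S ∩ V, y + u' ∈ K} := by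
  have hnear : ∀ᶠ p in 𝓝 (x, u),
      σ * planarCross u (z - p.1) < 0 ∧ σ * planarCross p.2 (z - p.1) < 0 :=
    (ContinuousAt.eventually_lt (by fun_prop) (by fun_prop) hneg).and
      (ContinuousAt.eventually_lt (by fun_prop) (by fun_prop) hneg)
  obtain ⟨V, hV, U₁, hU₁, hVU⟩ := mem_nhds_prod_iff.1 hnear
  -- A point `y` near `x` that reaches strictly past the line `ℝ u` covers the nearby directions on
  -- that side. If there is none, only the closed half-plane of `z - x` is left, and `x` suffices.
  by_cases hex : ∃ y ∈ S ∩ V, ∃ u₁ ∈ U₁, y + u₁ ∈ K ∧ 0 < σ * planarCross u u₁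
  · obtain ⟨y, ⟨hyS, hyV⟩, u₁, hu₁, hyu₁, hpos⟩ := hex
    have hyK := hSK hyS
    obtain ⟨huz, hu₁z⟩ := hVU (mk_mem_prod hyV hu₁)
    have hyu₁ : IsFeasibleDir K y u₁ := .of_add_mem hK hyK hyu₁
    have hyu : IsFeasibleDir K y u := by
      refine .of_planarCross (σ := σ) hK hyK (.sub_of_mem hK hyK hz) hyu₁ ?_ hpos.le ?_
      · rwa [planarCross_swap, mul_neg, neg_pos]
      · rw [planarCross_swap, mul_neg, neg_nonneg]
        exact huz.le
    obtain ⟨U, hU, hcover⟩ := hyu.exists_nhds_hasFiniteCover hK hyK hyS hyu₁ hpos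
    exact ⟨V, hV, U, hU, hcover.mono fun u' hu' ↦ ⟨hu'.1, hu'.2.1⟩⟩
  · push Not at hex
    obtain ⟨U, hU, hcover⟩ := hu.exists_nhds_hasFiniteCover (σ := -σ) hK (hSK hx) hx
      (.sub_of_mem hK (hSK hx) hz) (by rwa [neg_mul, neg_pos])
    refine ⟨V, hV, U ∩ U₁, inter_mem hU hU₁, hcover.mono ?_⟩
    rintro u' ⟨⟨hu', hu'₁⟩, -, y, hy, hyu'⟩
    exact ⟨hu', by rw [neg_mul, neg_nonneg]; exact hex y hy u' hu'₁ hyu'⟩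

lemma exists_nhds_prod_hasFiniteCover (hK : Convex ℝ K) (hKcl : IsClosed K)
    (hKint : (interior K).Nonempty) (hSK : S ⊆ K) (hx : x ∈ S) (hu : u ≠ 0) (hσ : σ ≠ 0) :
    ∃ V ∈ 𝓝 x, ∃ U ∈ 𝓝 u,
      HasFiniteCover K S {u' ∈ U | 0 ≤ σ * planarCross u u' ∧ ∃ y ∈ S ∩ V, y + u' ∈ K} := by
  by_cases hxu : x + u ∈ K
  · have hxK := hSK hx
    have hdir : IsFeasibleDir K x u := .of_add_mem hK hxK hxu
    obtain ⟨z, hz, hzx⟩ := exists_mem_planarCross_ne_zero hKint hu x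
    rcases (mul_ne_zero hσ hzx).lt_or_gt with hneg | hpos
    · exact exists_nhds_prod_hasFiniteCover_of_neg hK hSK hx hdir hz hneg
    · obtain ⟨U, hU, hcover⟩ :=
        hdir.exists_nhds_hasFiniteCover hK hxK hx (.sub_of_mem hK hxK hz) hpos
      exact ⟨univ, univ_mem, U, hU, hcover.mono fun u' hu' ↦ ⟨hu'.1, hu'.2.1⟩⟩
  · have hfar : ∀ᶠ p in 𝓝 (x, u), p.1 + p.2 ∉ K :=
      (continuous_add.tendsto (x, u)).eventually (hKcl.isOpen_compl.eventually_mem hxu)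
    obtain ⟨V, hV, U, hU, hVU⟩ := mem_nhds_prod_iff.1 hfar
    refine ⟨V, hV, U, hU, HasFiniteCover.empty.mono ?_⟩
    rintro u' ⟨hu', -, y, hy, hyu'⟩
    exact hVU (mk_mem_prod hy.2 hu') hyu'

lemma exists_nhds_hasFiniteCover_halfPlane (hK : Convex ℝ K) (hKcl : IsClosed K)
    (hKint : (interior K).Nonempty) (hS : IsCompact S) (hSK : S ⊆ K) (hu : u ≠ 0) (hσ : σ ≠ 0) :
    ∃ U ∈ 𝓝 u, HasFiniteCover K S {u' ∈ U | 0 ≤ σ * planarCross u u' ∧ ∃ y ∈ S, y + u' ∈ K} := by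
  suffices ∃ U ∈ 𝓝 u,
      HasFiniteCover K S {u' ∈ U | 0 ≤ σ * planarCross u u' ∧ ∃ y ∈ S ∩ S, y + u' ∈ K} by
    simpa only [inter_self] using this
  refine hS.induction_on (p := fun V ↦ ∃ U ∈ 𝓝 u,
    HasFiniteCover K S {u' ∈ U | 0 ≤ σ * planarCross u u' ∧ ∃ y ∈ S ∩ V, y + u' ∈ K})
    ⟨univ, univ_mem, by simpa using HasFiniteCover.empty⟩ ?_ ?_ ?_
  · rintro V W hVW ⟨U, hU, hcover⟩
    exact ⟨U, hU, hcover.mono fun u' ⟨hu', hσu', y, hy, hyu'⟩ ↦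
      ⟨hu', hσu', y, ⟨hy.1, hVW hy.2⟩, hyu'⟩⟩
  · rintro V W ⟨U, hU, hcover⟩ ⟨U', hU', hcover'⟩
    refine ⟨U ∩ U', inter_mem hU hU', (hcover.union hcover').mono ?_⟩
    rintro u' ⟨hu', hσu', y, ⟨hy, hyV | hyW⟩, hyu'⟩
    · exact .inl ⟨hu'.1, hσu', y, ⟨hy, hyV⟩, hyu'⟩
    · exact .inr ⟨hu'.2, hσu', y, ⟨hy, hyW⟩, hyu'⟩
  · intro x hx
    obtain ⟨V, hV, hcover⟩ := exists_nhds_prod_hasFiniteCover hK hKcl hKint hSK hx hu hσ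
    exact ⟨V, mem_nhdsWithin_of_mem_nhds hV, hcover⟩

lemma exists_nhds_hasFiniteCover (hK : Convex ℝ K) (hKcl : IsClosed K)
    (hKint : (interior K).Nonempty) (hS : IsCompact S) (hSK : S ⊆ K) (hu : u ≠ 0) :
    ∃ U ∈ 𝓝 u, HasFiniteCover K S {u' ∈ U | ∃ y ∈ S, y + u' ∈ K} := by
  obtain ⟨U, hU, hcover⟩ :=
    exists_nhds_hasFiniteCover_halfPlane hK hKcl hKint hS hSK hu one_ne_zero
  obtain ⟨U', hU', hcover'⟩ :=
    exists_nhds_hasFiniteCover_halfPlane hK hKcl hKint hS hSK hu (neg_ne_zero.2 one_ne_zero)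
  refine ⟨U ∩ U', inter_mem hU hU', (hcover.union hcover').mono fun u' ⟨hu', hyu'⟩ ↦ ?_⟩
  rcases le_total 0 (planarCross u u') with h | h
  · exact .inl ⟨hu'.1, by rwa [one_mul], hyu'⟩
  · exact .inr ⟨hu'.2, by rwa [neg_one_mul, neg_nonneg], hyu'⟩

lemma hasFiniteCover_of_isCompact (hK : Convex ℝ K) (hKcl : IsClosed K)
    (hKint : (interior K).Nonempty) (hS : IsCompact S) (hSK : S ⊆ K)
    (hcover : ∀ᶠ y in 𝓝 (0 : EuclideanSpace ℝ (Fin 2)), ∃ x ∈ S, x + y ∈ K)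
    (hA : IsCompact A) (hA₀ : 0 ∉ A) : HasFiniteCover K S A := by
  have hsmall : ∀ᶠ t in 𝓝 (0 : ℝ), ∀ u ∈ A, ∃ x ∈ S, x + t • u ∈ K := by
    refine hA.eventually_forall_of_forall_eventually fun u _ ↦ ?_
    have : Continuous fun p : ℝ × EuclideanSpace ℝ (Fin 2) ↦ p.1 • p.2 := by fun_prop
    exact (this.tendsto (0, u)).eventually (by simpa using hcover)
  obtain ⟨t, ht, ht₀⟩ := ((hsmall.filter_mono nhdsWithin_le_nhds).and
    (eventually_mem_nhdsWithin (s := Ioi 0))).exists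
  refine .of_smul ht₀ ?_
  have hcompact : IsCompact ((t • ·) '' A) := hA.image (continuous_const_smul t)
  suffices HasFiniteCover K S {u ∈ (t • ·) '' A | ∃ x ∈ S, x + u ∈ K} from
    this.mono fun _ ⟨u, hu, h⟩ ↦ ⟨⟨u, hu, h⟩, h ▸ ht u hu⟩
  refine hcompact.induction_on (p := fun B ↦ HasFiniteCover K S {u ∈ B | ∃ x ∈ S, x + u ∈ K})
    (by simpa using .empty) (fun B B' hBB' hB' ↦ hB'.mono fun u hu ↦ ⟨hBB' hu.1, hu.2⟩)
    (fun B B' hB hB' ↦ (hB.union hB').mono fun u ⟨hu, h⟩ ↦ hu.imp (⟨·, h⟩) (⟨·, h⟩)) ?_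
  rintro _ ⟨u, hu, rfl⟩
  have htu : t • u ≠ 0 := smul_ne_zero (ne_of_gt ht₀) (ne_of_mem_of_not_mem hu hA₀)
  obtain ⟨U, hU, hUcover⟩ := exists_nhds_hasFiniteCover hK hKcl hKint hS hSK htu
  exact ⟨U, mem_nhdsWithin_of_mem_nhds hU, hUcover⟩

end Covering

section Pruning

variable {E : Type*} [AddCommGroup E] [Module ℝ E] {K S : Set E} {d d' : E}

lemma exists_subset_card_le_one_forall_segment (hK : Convex ℝ K) (G : Finset E) {δ : ℝ}
    (hG : ∀ x ∈ G, x + δ • d ∈ K) :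
    ∃ T ⊆ G, T.card ≤ 1 ∧ ∀ u ∈ segment ℝ d d', ∀ x ∈ G, x + δ • u ∈ K →
      ∃ y ∈ T, y + δ • u ∈ K := by
  rcases G.eq_empty_or_nonempty with rfl | hne
  · exact ⟨∅, by simp⟩
  let reach (x : E) : Set ℝ := {s ∈ Icc 0 1 | x + δ • AffineMap.lineMap d d' s ∈ K}
  have hinitial {x} (hx : x ∈ G) {s t : ℝ} (hs : 0 ≤ s) (hst : s ≤ t) (ht : t ∈ reach x) :
      s ∈ reach x := by
    refine ⟨⟨hs, hst.trans ht.1.2⟩, ?_⟩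
    have hxt : (x + δ • d) + t • δ • (d' - d) ∈ K := by
      convert ht.2 using 1; rw [AffineMap.lineMap_apply_module']; module
    convert add_smul_mem_of_le hK (hG x hx) hs hst hxt using 1
    rw [AffineMap.lineMap_apply_module']; module
  -- These initial intervals are nested, so a maximal one contains all the others.
  obtain ⟨y, hyG, hy⟩ := G.exists_maximalFor reach hne
  refine ⟨{y}, by simpa using hyG, by simp, ?_⟩
  rw [segment_eq_image_lineMap]
  rintro _ ⟨s, hs, rfl⟩ x hx hxs
  refine ⟨y, Finset.mem_singleton_self y, ?_⟩
  suffices reach x ⊆ reach y from (this ⟨hs, hxs⟩).2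
  by_contra hxy
  obtain ⟨t, htx, hty⟩ := not_subset.1 hxy
  refine hxy (hy hx fun r hr ↦ hinitial hx hr.1.1 (le_of_not_ge fun htr ↦ hty ?_) htx)
  exact hinitial hyG htx.1.1 htr hr

lemma HasFiniteCover.exists_card_le_two (hK : Convex ℝ K) (hSK : S ⊆ K) {C : Finset E}
    (hC : ∀ x ∈ S, x ∉ C → ∀ u ∈ segment ℝ d d', IsFeasibleDir K x u →
      IsFeasibleDir K x d ∨ IsFeasibleDir K x d')
    (hcover : HasFiniteCover K S (segment ℝ d d')) :
    ∃ T : Finset E, ↑T ⊆ S ∧ T.card ≤ 2 ∧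
      ∃ δ : ℝ, 0 < δ ∧ ∀ u ∈ segment ℝ d d', ∃ x, (x ∈ C ∨ x ∈ T) ∧ x + δ • u ∈ K := by
  classical
  obtain ⟨F, hFS, hF⟩ := hcover
  let feasible (v : E) : Finset E := {x ∈ F | IsFeasibleDir K x v}
  have hfeasible (v : E) : ∀ᶠ δ in 𝓝[>] (0 : ℝ), ∀ x ∈ feasible v, x + δ • v ∈ K :=
    (Finset.eventually_all _).2 fun x hx ↦ (Finset.mem_filter.1 hx).2
  obtain ⟨δ, ⟨⟨hδF, hδd⟩, hδd'⟩, hδ⟩ := (((hF.and (hfeasible d)).and (hfeasible d')).and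
    eventually_mem_nhdsWithin).exists
  obtain ⟨T, hTd, hT, hTcover⟩ := exists_subset_card_le_one_forall_segment (d' := d') hK _ hδd
  obtain ⟨T', hTd', hT', hTcover'⟩ := exists_subset_card_le_one_forall_segment (d' := d) hK _ hδd'
  rw [segment_symm] at hTcover'
  refine ⟨T ∪ T', ?_, (Finset.card_union_le T T').trans (add_le_add hT hT'), δ, hδ, fun u hu ↦ ?_⟩
  · rw [Finset.coe_union]
    exact union_subset (fun x hx ↦ hFS (Finset.mem_filter.1 (hTd hx)).1)
      fun x hx ↦ hFS (Finset.mem_filter.1 (hTd' hx)).1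
  obtain ⟨x, hx, hxu⟩ := hδF u hu
  by_cases hxC : x ∈ C
  · exact ⟨x, .inl hxC, hxu⟩
  have hxK := hSK (hFS hx)
  rcases hC x (hFS hx) hxC u hu (.of_add_smul_mem hK hxK hδ hxu) with hxd | hxd'
  · obtain ⟨y, hy, hyu⟩ := hTcover u hu x (Finset.mem_filter.2 ⟨hx, hxd⟩) hxu
    exact ⟨y, .inr (Finset.mem_union_left _ hy), hyu⟩
  · obtain ⟨y, hy, hyu⟩ := hTcover' u hu x (Finset.mem_filter.2 ⟨hx, hxd'⟩) hxu
    exact ⟨y, .inr (Finset.mem_union_right _ hy), hyu⟩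

end Pruning

section Quadrants

/-- The endpoints `(±e₀, ±e₁)` of the four edges of the cross-polytope, one for each quadrant of
the plane. -/
noncomputable def quadrants : Finset (EuclideanSpace ℝ (Fin 2) × EuclideanSpace ℝ (Fin 2)) :=
  open scoped Classical in
  {EuclideanSpace.single 0 1, -EuclideanSpace.single 0 1} ×ˢ
    {EuclideanSpace.single 1 1, -EuclideanSpace.single 1 1}

lemma card_quadrants_le : quadrants.card ≤ 4 := by
  classical
  rw [quadrants, Finset.card_product]
  exact Nat.mul_le_mul Finset.card_le_two Finset.card_le_two

variable {q : EuclideanSpace ℝ (Fin 2) × EuclideanSpace ℝ (Fin 2)}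

lemma zero_notMem_segment_of_mem_quadrants (hq : q ∈ quadrants) : 0 ∉ segment ℝ q.1 q.2 := by
  rintro ⟨a, b, -, -, hab, h⟩
  obtain ⟨d, d'⟩ := q
  have h₀ := congrArg (fun v : EuclideanSpace ℝ (Fin 2) ↦ v 0) h
  have h₁ := congrArg (fun v : EuclideanSpace ℝ (Fin 2) ↦ v 1) h
  simp only [quadrants, Finset.mem_product, Finset.mem_insert, Finset.mem_singleton] at hq
  obtain ⟨rfl | rfl, rfl | rfl⟩ := hq <;> simp at h₀ h₁ <;> linarith

lemma exists_quadrant_smul_eq (y : EuclideanSpace ℝ (Fin 2)) :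
    ∃ q ∈ quadrants, ∃ u ∈ segment ℝ q.1 q.2, (|y 0| + |y 1|) • u = y := by
  obtain ⟨q, hq, hy⟩ : ∃ q ∈ quadrants, |y 0| • q.1 + |y 1| • q.2 = y := by
    have habs (i : Fin 2) : ∃ d ∈ ({EuclideanSpace.single i 1, -EuclideanSpace.single i 1} :
        Set (EuclideanSpace ℝ (Fin 2))), |y i| • d = y i • EuclideanSpace.single i 1 := by
      rcases abs_choice (y i) with h | h
      · exact ⟨_, .inl rfl, by rw [h]⟩
      · exact ⟨_, .inr rfl, by rw [h, neg_smul_neg]⟩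
    obtain ⟨d, hd, hyd⟩ := habs 0
    obtain ⟨d', hd', hyd'⟩ := habs 1
    refine ⟨(d, d'), by simpa [quadrants] using ⟨hd, hd'⟩, ?_⟩
    rw [hyd, hyd']
    ext i
    fin_cases i <;> simp
  rcases (add_nonneg (abs_nonneg (y 0)) (abs_nonneg (y 1))).eq_or_lt with hr | hr
  · refine ⟨q, hq, q.1, left_mem_segment ℝ _ _, ?_⟩
    have h₀ : |y 0| = 0 := by linarith [abs_nonneg (y 0), abs_nonneg (y 1)]
    have h₁ : |y 1| = 0 := by linarith [abs_nonneg (y 0), abs_nonneg (y 1)]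
    simpa [h₀, h₁] using hy
  · refine ⟨q, hq, _, ⟨|y 0| / (|y 0| + |y 1|), |y 1| / (|y 0| + |y 1|), by positivity,
      by positivity, by rw [← add_div, div_self hr.ne'], rfl⟩, ?_⟩
    rw [smul_add, smul_smul, smul_smul, mul_div_cancel₀ _ hr.ne', mul_div_cancel₀ _ hr.ne', hy]

lemma IsFeasibleDir.of_mem_quadrants {K : Set (EuclideanSpace ℝ (Fin 2))}
    {x u : EuclideanSpace ℝ (Fin 2)} (hK : Convex ℝ K) (hx : x ∈ K) (hq : q ∈ quadrants)
    (haxis : ∃ i, IsFeasibleDir K x (EuclideanSpace.single i 1) ∨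
      IsFeasibleDir K x (-EuclideanSpace.single i 1))
    (hu : u ∈ segment ℝ q.1 q.2) (hxu : IsFeasibleDir K x u) :
    IsFeasibleDir K x q.1 ∨ IsFeasibleDir K x q.2 := by
  have hsigned : (IsFeasibleDir K x q.1 ∨ IsFeasibleDir K x (-q.1)) ∨
      (IsFeasibleDir K x q.2 ∨ IsFeasibleDir K x (-q.2)) := by
    obtain ⟨d, d'⟩ := q
    simp only [quadrants, Finset.mem_product, Finset.mem_insert, Finset.mem_singleton] at hq
    rw [Fin.exists_fin_two] at haxis
    obtain ⟨rfl | rfl, rfl | rfl⟩ := hq <;> simpa [or_comm, or_left_comm, or_assoc] using haxis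
  rcases hsigned with (h | h) | h | h
  · exact .inl h
  · exact hxu.of_mem_segment_of_neg hK hx hu h
  · exact .inr h
  · exact (hxu.of_mem_segment_of_neg hK hx (segment_symm ℝ q.1 q.2 ▸ hu) h).symm

end Quadrants

section Main

variable {K S : Set (EuclideanSpace ℝ (Fin 2))} {c : EuclideanSpace ℝ (Fin 2)} {R : ℝ}

lemma exists_finset_card_le_add_eight (hK : Convex ℝ K) (hKcl : IsClosed K)
    (hKint : (interior K).Nonempty) (hS : IsCompact S) (hSK : S ⊆ K)
    (hcover : ∀ᶠ y in 𝓝 (0 : EuclideanSpace ℝ (Fin 2)), ∃ x ∈ S, x + y ∈ K)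
    {C : Finset (EuclideanSpace ℝ (Fin 2))} (hCS : ↑C ⊆ S)
    (hC : ∀ x ∈ S, x ∉ C → ∃ i, IsFeasibleDir K x (EuclideanSpace.single i 1) ∨
      IsFeasibleDir K x (-EuclideanSpace.single i 1)) :
    ∃ F : Finset (EuclideanSpace ℝ (Fin 2)), ↑F ⊆ S ∧ F.card ≤ C.card + 8 ∧
      ∀ᶠ y in 𝓝 (0 : EuclideanSpace ℝ (Fin 2)), ∃ x ∈ F, x + y ∈ K := by
  classical
  have hquadrant (q) (hq : q ∈ quadrants) :=
    (hasFiniteCover_of_isCompact hK hKcl hKint hS hSK hcover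
      (by rw [segment_eq_image_lineMap]; exact isCompact_Icc.image AffineMap.lineMap_continuous)
      (zero_notMem_segment_of_mem_quadrants hq)).exists_card_le_two hK hSK fun x hx hxC _ hu hxu ↦
        hxu.of_mem_quadrants hK (hSK hx) hq (hC x hx hxC) hu
  choose! T hTS hT δ hδ hδT using hquadrant
  refine ⟨C ∪ quadrants.biUnion T, ?_, ?_, ?_⟩
  · rw [Finset.coe_union, Finset.coe_biUnion]
    exact union_subset hCS (iUnion₂_subset hTS)
  · calc (C ∪ quadrants.biUnion T).card ≤ C.card + (quadrants.biUnion T).card :=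
          Finset.card_union_le _ _
      _ ≤ C.card + quadrants.card * 2 := by gcongr; exact Finset.card_biUnion_le_card_mul _ _ _ hT
      _ ≤ C.card + 8 := by have := card_quadrants_le; omega
  · have hnear : ∀ᶠ y : EuclideanSpace ℝ (Fin 2) in 𝓝 0, ∀ q ∈ quadrants, |y 0| + |y 1| < δ q :=
      (Finset.eventually_all _).2 fun q hq ↦
        ContinuousAt.eventually_lt (by fun_prop) (by fun_prop) (by simpa using hδ q hq)
    filter_upwards [hnear] with y hy
    obtain ⟨q, hq, u, hu, hyu⟩ := exists_quadrant_smul_eq y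
    obtain ⟨x, hx, hxu⟩ := hδT q hq u hu
    have hxF : x ∈ C ∪ quadrants.biUnion T :=
      Finset.mem_union.2 (hx.imp_right fun h ↦ Finset.mem_biUnion.2 ⟨q, hq, h⟩)
    have hxK : x ∈ K := hSK (hx.elim (hCS ·) (hTS q hq ·))
    refine ⟨x, hxF, ?_⟩
    have := add_smul_mem_of_le hK hxK (by positivity) (hy q hq).le hxu
    rwa [hyu] at this

lemma IsCircumball.exists_finset_card_le_eleven (hKc : IsCompact K) (hK : Convex ℝ K)
    (hKint : (interior K).Nonempty) (hcirc : IsCircumball K c R)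
    (hcover : ∀ᶠ y in 𝓝[K] c, ∃ x ∈ K ∩ sphere c R, x + (y - c) ∈ K) :
    ∃ F : Finset (EuclideanSpace ℝ (Fin 2)), ↑F ⊆ K ∩ sphere c R ∧ F.card ≤ 11 ∧
      ∀ᶠ y in 𝓝 c, ∃ x ∈ F, x + (y - c) ∈ K := by
  have hhull := hcirc.mem_convexHull hKc
  have hc : c ∈ interior K := mem_interior_of_translates_cover hK hKint
    (convexHull_min inter_subset_left hK hhull) hcirc.1 hcover
  rw [nhdsWithin_eq_nhds.2 (mem_interior_iff_mem_nhds.1 hc)] at hcover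
  have htendsto : Tendsto (c + ·) (𝓝 0) (𝓝 c) := by
    simpa using (continuous_const_add c).tendsto 0
  obtain ⟨C, hCS, hC, haxis⟩ := exists_finset_card_le_three_isFeasibleDir_axis hK hhull
  obtain ⟨F, hFS, hF, hFcover⟩ := exists_finset_card_le_add_eight hK hKc.isClosed hKint
    (hKc.inter_right isClosed_sphere) inter_subset_left
    (by simpa only [add_sub_cancel_left] using htendsto.eventually hcover) hCS haxis
  refine ⟨F, hFS, hF.trans (by omega), ?_⟩
  exact (tendsto_sub_nhds_zero_iff.2 tendsto_id).eventually hFcover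

end Main

/-- Remark 3.2 (A): if for a two-dimensional convex body `K ⊆ ℝ²` the translates `K + (c - x)`,
`x ∈ K ∩ bd B(c,R)`, cover a neighborhood of `c` in `K`, then at most `12` such translates
suffice to cover a full neighborhood of `c`. -/
theorem cover_with_at_most_twelve_translates (K : Set (EuclideanSpace ℝ (Fin 2)))
    (hKc : IsCompact K) (hKconv : Convex ℝ K) (hKint : (interior K).Nonempty)
    (c : EuclideanSpace ℝ (Fin 2)) (R : ℝ) (hcirc : IsCircumball K c R)
    (δ' : ℝ) (hδ' : 0 < δ')
    (hcov : K ∩ ball c δ' ⊆ ⋃ x ∈ K ∩ sphere c R, (· + (c - x)) '' K) :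
    ∃ (k : ℕ) (x : Fin k → EuclideanSpace ℝ (Fin 2)), k ≤ 12 ∧
      (∀ i, x i ∈ K ∩ sphere c R) ∧
      ∃ δ : ℝ, 0 < δ ∧ ball c δ ⊆ ⋃ i, (· + (c - x i)) '' K := by
  have htranslate (x y : EuclideanSpace ℝ (Fin 2)) :
      y ∈ (· + (c - x)) '' K ↔ x + (y - c) ∈ K := by
    rw [image_add_right, mem_preimage]
    congr! 1
    abel
  have hcover : ∀ᶠ y in 𝓝[K] c, ∃ x ∈ K ∩ sphere c R, x + (y - c) ∈ K := by
    filter_upwards [inter_mem_nhdsWithin K (ball_mem_nhds c hδ')] with y hy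
    simpa only [mem_iUnion, htranslate, exists_prop] using hcov hy
  obtain ⟨F, hFS, hF, hFcover⟩ := hcirc.exists_finset_card_le_eleven hKc hKconv hKint hcover
  obtain ⟨δ, hδ, hball⟩ := Metric.eventually_nhds_iff_ball.1 hFcover
  refine ⟨F.card, fun i ↦ F.equivFin.symm i, by omega, fun i ↦ hFS (F.equivFin.symm i).2, δ, hδ,
    fun y hy ↦ ?_⟩
  obtain ⟨x, hx, hxy⟩ := hball y hy
  exact mem_iUnion.2 ⟨F.equivFin ⟨x, hx⟩, (htranslate _ _).2 (by simpa using hxy)⟩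
end
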